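/- arXiv:2307.06453 — 2 statements merged into one kernel-verified Lean document; each statement's English description precedes it below -/
import Mathlib

section
/- Let (p_n) be a sequence in [0,1] such that n·p_n·(1−p_n) → ∞ as n → ∞. Then for every ε > 0, with high probability the binomial random digraph D ~ 𝔻(n, p_n) has a bisection which is an ε-almost-majority colouring. -/
open MeasureTheory Filter

/-- Bernoulli measure on `Bool` with parameter `p`. -/
noncomputable def bernoulliM (p : ℝ) : Measure Bool :=
  (Real.toNNReal p) • Measure.dirac true + (Real.toNNReal (1 - p)) • Measure.dirac false

instance (p : ℝ) : IsFiniteMeasure (bernoulliM p) := by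
  unfold bernoulliM; infer_instance

/-- The binomial random digraph measure `𝔻(n,p)`: each of the `n(n-1)` possible arcs
(ordered pairs of distinct vertices) is present independently with probability `p`
(the diagonal entries of the matrix are ignored, via `DiAdj`). -/
noncomputable def diMeasure (n : ℕ) (p : ℝ) : Measure (Fin n → Fin n → Bool) :=
  Measure.pi fun _ => Measure.pi fun _ => bernoulliM p

/-- The arc relation of the digraph encoded by the matrix `A`. -/
def DiAdj {n : ℕ} (A : Fin n → Fin n → Bool) (v w : Fin n) : Prop :=
  v ≠ w ∧ A v w = true

/-- A vertex `v` is *majority-coloured* with respect to the colouring `c` if at most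
half of its out-neighbours have the same colour as `v`. -/
def MajorityAt {n : ℕ} {α : Type*} (A : Fin n → Fin n → Bool) (c : Fin n → α) (v : Fin n) :
    Prop :=
  2 * ({w | DiAdj A v w ∧ c w = c v} : Set (Fin n)).ncard ≤
    ({w | DiAdj A v w} : Set (Fin n)).ncard

/-- A red-blue colouring of `Fin n` is a *bisection* if its two colour classes
differ in size by at most 1. -/
def IsBisection {n : ℕ} (c : Fin n → Bool) : Prop :=
  |(({v | c v = true} : Set (Fin n)).ncard : ℤ) -
    (({v | c v = false} : Set (Fin n)).ncard : ℤ)| ≤ 1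


namespace MajBis

/-- binomial point probabilities -/
noncomputable def bpm (m : ℕ) (p : ℝ) (k : ℕ) : ℝ :=
  (m.choose k : ℝ) * p ^ k * (1 - p) ^ (m - k)

theorem bpm_eq (m : ℕ) (p : ℝ) (k : ℕ) : (bernsteinPolynomial ℝ m k).eval p = bpm m p k := by
  simp [bernsteinPolynomial, bpm]

theorem bpm_nonneg {m : ℕ} {p : ℝ} (h0 : 0 ≤ p) (h1 : p ≤ 1) (k : ℕ) : 0 ≤ bpm m p k := by
  have : 0 ≤ 1 - p := by linarith
  unfold bpm; positivity

theorem bpm_sum (m : ℕ) (p : ℝ) : ∑ k ∈ Finset.range (m + 1), bpm m p k = 1 := by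
  have := congrArg (Polynomial.eval p) (bernsteinPolynomial.sum ℝ m)
  simpa [Polynomial.eval_finsetSum, bpm_eq] using this

theorem bpm_mean (m : ℕ) (p : ℝ) : ∑ k ∈ Finset.range (m + 1), (k : ℝ) * bpm m p k = m * p := by
  have := congrArg (Polynomial.eval p) (bernsteinPolynomial.sum_smul ℝ m)
  simpa [Polynomial.eval_finsetSum, bpm_eq] using this

theorem bpm_var (m : ℕ) (p : ℝ) :
    ∑ k ∈ Finset.range (m + 1), (m * p - k) ^ 2 * bpm m p k = m * p * (1 - p) := by
  have := congrArg (Polynomial.eval p) (bernsteinPolynomial.variance ℝ m)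
  simpa [Polynomial.eval_finsetSum, bpm_eq] using this

theorem bpm_step (m : ℕ) (p : ℝ) (k : ℕ) (hk : k ≤ m) :
    (k + 1 : ℝ) * (1 - p) * bpm m p (k + 1) = (m - k) * p * bpm m p k := by
  have h := Nat.choose_succ_right_eq m k
  have h' : (m.choose (k + 1) : ℝ) * (k + 1) = m.choose k * (m - k) := by
    have := congrArg (Nat.cast : ℕ → ℝ) h
    push_cast [Nat.cast_sub hk] at this
    exact this
  rcases hk.lt_or_eq with hlt | rfl
  · unfold bpm
    have e : m - k = (m - (k + 1)) + 1 := by omega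
    rw [e, pow_succ, pow_succ]
    linear_combination (p ^ k * p * (1 - p) ^ (m - (k + 1)) * (1 - p)) * h'
  · simp [bpm]

theorem bpm_inv (m : ℕ) (p : ℝ) (h0 : 0 < p) (h1 : p < 1) :
    ∑ k ∈ Finset.range (m + 1), bpm m p k * (1 / ((k + 1) * (k + 2))) ≤
      1 / ((m + 1) * (m + 2) * p ^ 2) := by
  have key : ∀ k ∈ Finset.range (m + 1), bpm m p k * (1 / (((k:ℝ) + 1) * (k + 2)))
      = bpm (m + 2) p (k + 2) * (1 / ((m + 1) * (m + 2) * p ^ 2)) := by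
    intro k hk
    have hk' : k ≤ m := by simpa [Nat.lt_succ_iff] using hk
    have e1 := Nat.add_one_mul_choose_eq m k
    have e2 := Nat.add_one_mul_choose_eq (m + 1) (k + 1)
    have f1 : ((m : ℝ) + 1) * m.choose k = (m + 1).choose (k + 1) * (k + 1) := by exact_mod_cast e1
    have f2 : ((m : ℝ) + 2) * (m + 1).choose (k + 1) = (m + 2).choose (k + 2) * (k + 2) := by
      have := congrArg (Nat.cast : ℕ → ℝ) e2
      push_cast at this
      linear_combination this
    unfold bpm
    have e : m + 2 - (k + 2) = m - k := by omega
    rw [e]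
    field_simp
    linear_combination (p ^ 2 * p ^ k * (1 - p) ^ (m - k)) * (((m : ℝ) + 2) * f1 + (k + 1) * f2)
  rw [Finset.sum_congr rfl key, ← Finset.sum_mul]
  have hle : ∑ k ∈ Finset.range (m + 1), bpm (m + 2) p (k + 2) ≤ 1 := by
    rw [← bpm_sum (m + 2) p, Finset.sum_range_succ' _ (m + 2), Finset.sum_range_succ' _ (m + 1)]
    have := bpm_nonneg (m := m + 2) h0.le h1.le 0
    have := bpm_nonneg (m := m + 2) h0.le h1.le 1
    simp only [zero_add, add_assoc, Nat.reduceAdd]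
    linarith
  have : 0 ≤ 1 / (((m:ℝ) + 1) * (m + 2) * p ^ 2) := by positivity
  nlinarith

theorem bpm_le (m : ℕ) (p : ℝ) (h0 : 0 < p) (h1 : p < 1) (ζ : ℝ) (hζ : 0 < ζ)
    (hL1 : 1 ≤ m * p * (1 - p)) (hL2 : 4 ≤ ζ ^ 2 * (m * p * (1 - p))) (K : ℕ) :
    bpm m p K ≤ ζ := by
  set q := 1 - p with hq
  have hq0 : 0 < q := by linarith
  set L := m * p * q with hL
  have hm : 0 < (m : ℝ) := by
    rcases Nat.eq_zero_or_pos m with h | h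
    · subst h; simp [hL] at hL1; linarith
    · exact_mod_cast h
  have hnn := fun k => bpm_nonneg (m := m) h0.le h1.le k
  rcases lt_or_ge m K with hK | hK
  · have : bpm m p K = 0 := by simp [bpm, Nat.choose_eq_zero_of_lt hK]
    rw [this]; exact hζ.le
  have htel : bpm m p K ≤ ∑ k ∈ Finset.range (m + 1), |bpm m p k - bpm m p (k + 1)| := by
    have h1 : ∑ k ∈ Finset.Ico K (m + 1), (bpm m p k - bpm m p (k + 1)) = bpm m p K := by
      have := Finset.sum_Ico_sub (bpm m p) (show K ≤ m + 1 by omega)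
      have hz : bpm m p (m + 1) = 0 := by simp [bpm]
      rw [hz] at this
      have h2 : ∑ k ∈ Finset.Ico K (m + 1), (bpm m p k - bpm m p (k + 1))
        = - ∑ k ∈ Finset.Ico K (m + 1), (bpm m p (k+1) - bpm m p k) := by
        rw [← Finset.sum_neg_distrib]; exact Finset.sum_congr rfl fun _ _ => by ring
      rw [h2, this]; ring
    rw [← h1]
    calc _ ≤ ∑ k ∈ Finset.Ico K (m + 1), |bpm m p k - bpm m p (k + 1)| :=
          Finset.sum_le_sum fun _ _ => le_abs_self _
      _ ≤ _ := Finset.sum_le_sum_of_subset_of_nonneg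
          (by intro x; simp) (fun _ _ _ => abs_nonneg _)
  set lam := ζ / (L + 1) with hlam
  have hLp : 0 < L := by linarith
  have hlp : 0 < lam := by positivity
  have hterm : ∀ k ∈ Finset.range (m + 1), |bpm m p k - bpm m p (k + 1)| ≤
      (lam / 2) * ((m * p - k) ^ 2 * bpm m p k - 2 * q * (m * p) * bpm m p k
        + 2 * q * (k * bpm m p k) + q ^ 2 * bpm m p k)
      + (1 / (lam * q ^ 2)) * (bpm m p k * (1 / ((k + 1) * (k + 2)))) := by
    intro k hk
    have hk' : k ≤ m := by simpa [Nat.lt_succ_iff] using hk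
    have hs := bpm_step m p k hk'
    have hkp : (0:ℝ) < k + 1 := by positivity
    have e : bpm m p k - bpm m p (k + 1) = bpm m p k * (-(m * p - k - q) / ((k + 1) * q)) := by
      field_simp
      rw [hq] at *
      linear_combination - hs
    rw [e, abs_mul, abs_of_nonneg (hnn k)]
    have am : |-(m * p - k - q) / ((k + 1) * q)| ≤
       (lam / 2) * (m * p - k - q) ^ 2 + (1 / (lam * q ^ 2)) * (1 / ((k + 1) * (k + 2))) := by
      have s1 : |-(m * p - k - q) / ((k + 1) * q)| ≤
       (lam / 2) * (m * p - k - q) ^ 2 + (1 / (2 * lam)) * (1 / ((k + 1) * q)) ^ 2 := by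
        rw [abs_div, abs_neg, abs_of_pos (a := ((k:ℝ) + 1) * q) (by positivity), div_eq_mul_one_div]
        set x := |(m * p - k - q : ℝ)|
        rw [← sq_abs (m * p - k - q : ℝ)]
        set y := 1 / (((k:ℝ) + 1) * q)
        have : (lam / 2) * x ^ 2 + (1 / (2 * lam)) * y ^ 2 - x * y = (lam * x - y) ^ 2 / (2 * lam) := by
          field_simp; ring
        have : 0 ≤ (lam * x - y) ^ 2 / (2 * lam) := by positivity
        linarith
      refine s1.trans ?_
      have : (1 / (2 * lam)) * (1 / (((k:ℝ) + 1) * q)) ^ 2 ≤ (1 / (lam * q ^ 2)) * (1 / ((k + 1) * (k + 2))) := by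
        have e1 : (1 / (2 * lam)) * (1 / (((k:ℝ) + 1) * q)) ^ 2 =
          (1 / (lam * q ^ 2)) * (1 / (2 * (k + 1) ^ 2)) := by field_simp
        rw [e1]
        refine mul_le_mul_of_nonneg_left (one_div_le_one_div_of_le (by positivity) ?_) (by positivity)
        nlinarith
      linarith
    calc _ ≤ bpm m p k * ((lam / 2) * (m * p - k - q) ^ 2 + (1 / (lam * q ^ 2)) * (1 / ((k + 1) * (k + 2)))) :=
          mul_le_mul_of_nonneg_left am (hnn k)
      _ = _ := by ring
  refine htel.trans ((Finset.sum_le_sum hterm).trans ?_)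
  rw [Finset.sum_add_distrib, ← Finset.mul_sum, ← Finset.mul_sum, Finset.sum_add_distrib,
    Finset.sum_add_distrib, Finset.sum_sub_distrib, ← Finset.mul_sum, ← Finset.mul_sum,
    ← Finset.mul_sum, bpm_sum, bpm_mean, bpm_var]
  have hi := bpm_inv m p h0 h1
  have hq1 : q ≤ 1 := by linarith
  have a1 : (lam / 2) * (m * p * (1 - p) - 2 * q * (m * p) * 1 + 2 * q * (m * p) + q ^ 2 * 1) ≤ ζ / 2 := by
    have : (lam / 2) * (m * p * (1 - p) - 2 * q * (m * p) * 1 + 2 * q * (m * p) + q ^ 2 * 1) = lam / 2 * (L + q ^ 2) := by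
      rw [hL, hq]; ring
    rw [this]
    have : lam * (L + 1) = ζ := by rw [hlam]; field_simp
    have hqq : q ^ 2 ≤ 1 := pow_le_one₀ hq0.le hq1
    have := mul_le_mul_of_nonneg_left hqq hlp.le
    linarith
  have a2 : (1 / (lam * q ^ 2)) * (1 / ((m + 1) * (m + 2) * p ^ 2)) ≤ ζ / 2 := by
    have : (1 / (lam * q ^ 2)) * (1 / ((m + 1) * (m + 2) * p ^ 2)) ≤ 1 / (lam * L ^ 2) := by
      have : 1 / ((m + 1) * (m + 2) * p ^ 2) ≤ 1 / ((m:ℝ) ^ 2 * p ^ 2) := by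
        gcongr; nlinarith
      calc _ ≤ (1 / (lam * q ^ 2)) * (1 / ((m:ℝ) ^ 2 * p ^ 2)) :=
            mul_le_mul_of_nonneg_left this (by positivity)
        _ = _ := by rw [hL]; field_simp
    refine this.trans ?_
    rw [hlam]
    rw [div_le_iff₀ (by positivity)]
    have : ζ / 2 * (ζ / (L + 1) * L ^ 2) = (ζ ^ 2 * L) * L / (2 * (L + 1)) := by field_simp
    rw [this, le_div_iff₀ (by positivity)]
    nlinarith
  have a3 : (1 / (lam * q ^ 2)) * ∑ k ∈ Finset.range (m + 1), bpm m p k * (1 / (((k:ℝ) + 1) * (k + 2)))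
     ≤ (1 / (lam * q ^ 2)) * (1 / ((m + 1) * (m + 2) * p ^ 2)) :=
    mul_le_mul_of_nonneg_left hi (by positivity)
  linarith

end MajBis
namespace MajBis

/-- point weights of the Bernoulli distribution -/
def pw (p : ℝ) (b : Bool) : ℝ := if b = true then p else 1 - p

/-- product weight -/
noncomputable def W {ι : Type*} [Fintype ι] (p : ℝ) (r : ι → Bool) : ℝ := ∏ i, pw p (r i)

open Classical in
/-- probability of an event under the product weight -/
noncomputable def Pr {ι : Type*} [Fintype ι] [DecidableEq ι] (p : ℝ) (E : (ι → Bool) → Prop) : ℝ :=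
  ∑ r, if E r then W p r else 0

section
variable {ι : Type*} [Fintype ι] [DecidableEq ι] {p : ℝ}
set_option linter.unusedSectionVars false

theorem Pr_eq (E : (ι → Bool) → Prop) [DecidablePred E] :
    Pr p E = ∑ r, if E r then W p r else 0 := by
  unfold Pr
  refine Finset.sum_congr rfl fun r _ => ?_
  by_cases h : E r <;> simp [h]

theorem pw_nonneg (h0 : 0 ≤ p) (h1 : p ≤ 1) (b : Bool) : 0 ≤ pw p b := by
  unfold pw; split_ifs <;> linarith

theorem W_nonneg (h0 : 0 ≤ p) (h1 : p ≤ 1) (r : ι → Bool) : 0 ≤ W p r :=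
  Finset.prod_nonneg fun _ _ => pw_nonneg h0 h1 _

theorem pw_sum : ∑ b, pw p b = 1 := by simp [pw]

theorem sum_prod_eq {κ Ω : Type*} [Fintype κ] [DecidableEq κ] [Fintype Ω] (f : κ → Ω → ℝ) :
    ∑ x : κ → Ω, ∏ i, f i (x i) = ∏ i, ∑ a, f i a := by
  rw [Finset.prod_univ_sum, Fintype.piFinset_univ]

theorem W_sum : ∑ r : ι → Bool, W p r = 1 := by
  classical
  unfold W
  rw [sum_prod_eq (fun (_ : ι) b => pw p b), pw_sum]
  simp

theorem Pr_nonneg (h0 : 0 ≤ p) (h1 : p ≤ 1) (E : (ι → Bool) → Prop) : 0 ≤ Pr p E := by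
  classical
  unfold Pr
  refine Finset.sum_nonneg fun r _ => ?_
  split_ifs
  · exact W_nonneg h0 h1 r
  · exact le_rfl

theorem Pr_mono (h0 : 0 ≤ p) (h1 : p ≤ 1) {E F : (ι → Bool) → Prop} (h : ∀ r, E r → F r) :
    Pr p E ≤ Pr p F := by
  classical
  unfold Pr
  refine Finset.sum_le_sum fun r _ => ?_
  have := W_nonneg h0 h1 r
  by_cases hE : E r
  · simp [hE, h r hE]
  · simp only [hE, if_false]; split_ifs <;> simp [this]

theorem Pr_or (h0 : 0 ≤ p) (h1 : p ≤ 1) {E F G : (ι → Bool) → Prop} (h : ∀ r, E r → F r ∨ G r) :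
    Pr p E ≤ Pr p F + Pr p G := by
  classical
  unfold Pr
  rw [← Finset.sum_add_distrib]
  refine Finset.sum_le_sum fun r _ => ?_
  have := W_nonneg h0 h1 r
  have := h r
  by_cases hE : E r <;> by_cases hF : F r <;> by_cases hG : G r <;> simp_all

theorem Pr_not (E : (ι → Bool) → Prop) : Pr p E + Pr p (fun r => ¬ E r) = 1 := by
  classical
  unfold Pr
  rw [← Finset.sum_add_distrib, ← W_sum (ι := ι) (p := p)]
  refine Finset.sum_congr rfl fun r _ => ?_
  by_cases hE : E r <;> simp [hE]

theorem Pr_two (h0 : 0 ≤ p) (h1 : p ≤ 1) (U V V' : (ι → Bool) → Prop) :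
    Pr p (fun r => U r ∧ V r) + Pr p (fun r => U r ∧ V' r) ≤
      Pr p U + Pr p (fun r => V r ∧ V' r) := by
  classical
  unfold Pr
  rw [← Finset.sum_add_distrib, ← Finset.sum_add_distrib]
  refine Finset.sum_le_sum fun r _ => ?_
  have := W_nonneg h0 h1 r
  by_cases hE : U r <;> by_cases hF : V r <;> by_cases hG : V' r <;> simp_all

theorem W_perm (π : Equiv.Perm ι) (r : ι → Bool) : W p (fun i => r (π i)) = W p r := by
  unfold W
  exact Equiv.prod_comp π (fun i => pw p (r i))

theorem Pr_perm (π : Equiv.Perm ι) (E : (ι → Bool) → Prop) :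
    Pr p (fun r => E (fun i => r (π i))) = Pr p E := by
  classical
  unfold Pr
  refine Fintype.sum_equiv (Equiv.arrowCongr π.symm (Equiv.refl Bool)) _ _ fun r => ?_
  have : (Equiv.arrowCongr π.symm (Equiv.refl Bool)) r = fun i => r (π i) := by
    funext i; simp [Equiv.arrowCongr]
  rw [this, W_perm]

theorem Pr_half (h0 : 0 ≤ p) (h1 : p ≤ 1) (π : Equiv.Perm ι) (E : (ι → Bool) → Prop)
    (h : ∀ r, E r → ¬ E (fun i => r (π i))) : Pr p E ≤ 1 / 2 := by
  have a := Pr_not (p := p) E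
  have b : Pr p E ≤ Pr p (fun r => ¬ E r) := by
    rw [← Pr_perm π (fun r => ¬ E r)]
    exact Pr_mono h0 h1 h
  linarith

theorem card_count (k : ℕ) :
    (Finset.univ.filter fun x : ι → Bool =>
      (Finset.univ.filter fun i => x i = true).card = k).card = (Fintype.card ι).choose k := by
  classical
  rw [← Finset.card_univ, ← Finset.card_powersetCard]
  refine Finset.card_nbij' (fun x => Finset.univ.filter fun i => x i = true)
    (fun s i => decide (i ∈ s)) ?_ ?_ ?_ ?_
  · intro x hx; simpa [Finset.mem_powersetCard] using hx
  · intro s hs; simpa [Finset.mem_powersetCard] using hs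
  · intro x _; funext i; simp
  · intro s _; ext i; simp

theorem W_eq (x : ι → Bool) :
    W p x = p ^ (Finset.univ.filter fun i => x i = true).card *
      (1 - p) ^ (Fintype.card ι - (Finset.univ.filter fun i => x i = true).card) := by
  classical
  unfold W pw
  rw [Finset.prod_ite, Finset.prod_const, Finset.prod_const]
  congr 2
  rw [← Finset.card_univ, ← Finset.card_filter_add_card_filter_not (s := Finset.univ)
    (fun i => x i = true)]
  omega

theorem Pr_count (k : ℕ) :
    Pr p (fun x : ι → Bool => (Finset.univ.filter fun i => x i = true).card = k) =
      bpm (Fintype.card ι) p k := by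
  classical
  rw [Pr_eq, ← Finset.sum_filter]
  rw [Finset.sum_congr rfl (g := fun _ => p ^ k * (1 - p) ^ (Fintype.card ι - k))]
  · rw [Finset.sum_const]
    have := card_count (ι := ι) k
    simp only [nsmul_eq_mul, bpm]
    rw [mul_assoc]
    congr 2
  · intro x hx
    simp only [Finset.mem_filter, Finset.mem_univ, true_and] at hx
    rw [W_eq, hx]

/-- indicator as integer -/
def xi (r : ι → Bool) (w : ι) : ℤ := if r w = true then 1 else 0

theorem xi_sum_nonneg (s : Finset ι) (r : ι → Bool) : 0 ≤ ∑ w ∈ s, xi r w :=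
  Finset.sum_nonneg fun _ _ => by unfold xi; split_ifs <;> simp

theorem xi_sum_le (s : Finset ι) (r : ι → Bool) : ∑ w ∈ s, xi r w ≤ s.card := by
  have : ∑ w ∈ s, xi r w ≤ ∑ w ∈ s, (1 : ℤ) :=
    Finset.sum_le_sum fun _ _ => by unfold xi; split_ifs <;> simp
  simpa using this

/-- signed out-degree -/
def S (c r : ι → Bool) : ℤ :=
  ∑ w ∈ Finset.univ.filter (fun w => c w = true), xi r w -
    ∑ w ∈ Finset.univ.filter (fun w => ¬ c w = true), xi r w

theorem Pr_S_le (h0 : 0 ≤ p) (h1 : p ≤ 1) (c : ι → Bool) (j : ℤ) (δ : ℝ)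
    (hδ : ∀ k, bpm (Finset.univ.filter (fun w => ¬ c w = true)).card p k ≤ δ) (hδ0 : 0 ≤ δ) :
    Pr p (fun r => S c r = j) ≤ δ := by
  classical
  let P : ι → Prop := fun w => ¬ c w = true
  let e := Equiv.piEquivPiSubtypeProd P (fun _ => Bool)
  have hW : ∀ r : ι → Bool, W p r = W p (e r).1 * W p (e r).2 := by
    intro r
    exact (Fintype.prod_subtype_mul_prod_subtype P (fun i => pw p (r i))).symm
  have hS : ∀ r : ι → Bool, S c r =
      ∑ w : {w // ¬ P w}, xi (e r).2 w - ∑ w : {w // P w}, xi (e r).1 w := by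
    intro r
    unfold S
    congr 1
    · exact Finset.sum_subtype (p := fun w => ¬ P w) (f := xi r) (F := inferInstance)
        (Finset.univ.filter fun w => c w = true) (by intro x; simp [P])
    · exact Finset.sum_subtype (p := P) (f := xi r) (F := inferInstance)
        (Finset.univ.filter fun w => ¬ c w = true) (by intro x; simp [P])
  have hcard : Fintype.card {w // P w} = (Finset.univ.filter (fun w => ¬ c w = true)).card :=
    Fintype.card_subtype _
  have h2 : Pr p (fun r => S c r = j) = ∑ y : {w // ¬ P w} → Bool, W p y *
      Pr p (fun x : {w // P w} → Bool => (∑ w, xi y w) - ∑ w, xi x w = j) := by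
    simp only [Pr_eq, Finset.mul_sum]
    rw [Finset.sum_comm]
    rw [← Fintype.sum_prod_type' (f := fun (x : {w // P w} → Bool) (y : {w // ¬ P w} → Bool) =>
      W p y * if (∑ w, xi y w) - ∑ w, xi x w = j then W p x else 0)]
    refine Fintype.sum_equiv e _ _ fun r => ?_
    rw [hS r, hW r]
    by_cases h : ∑ w : {w // ¬ P w}, xi (e r).2 w - ∑ w : {w // P w}, xi (e r).1 w = j
    · simp only [h, if_true]; ring
    · simp only [h, if_false]; ring
  rw [h2]
  calc _ ≤ ∑ y : {w // ¬ P w} → Bool, W p y * δ := by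
        refine Finset.sum_le_sum fun y _ => mul_le_mul_of_nonneg_left ?_ (W_nonneg h0 h1 y)
        refine (Pr_mono h0 h1 (F := fun x : {w // P w} → Bool =>
          (Finset.univ.filter fun i => x i = true).card = ((∑ w, xi y w) - j).toNat) ?_).trans ?_
        · intro x hx
          have : ∑ w, xi x w = ((Finset.univ.filter fun i => x i = true).card : ℤ) := by
            simp [xi]
          rw [this] at hx
          omega
        · rw [Pr_count, hcard]; exact hδ _
    _ = δ := by rw [← Finset.sum_mul, W_sum, one_mul]

theorem exists_swap (T F : Finset ι) (hd : Disjoint T F) (hc : T.card ≤ F.card) :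
    ∃ π : Equiv.Perm ι, ∃ F' ⊆ F, F'.card = T.card ∧
      (∀ g : ι → ℤ, ∑ w ∈ T, g (π w) = ∑ w ∈ F', g w) ∧
      (∀ g : ι → ℤ, ∑ w ∈ F', g (π w) = ∑ w ∈ T, g w) ∧
      (∀ w, w ∉ T → w ∉ F' → π w = w) := by
  obtain ⟨F', hF', hcard⟩ := Finset.exists_subset_card_eq hc
  have hd' : Disjoint T F' := hd.mono_right hF'
  let e : T ≃ F' := Finset.equivOfCardEq hcard.symm
  let f : ι → ι := fun w => if h : w ∈ T then (e ⟨w, h⟩).1 else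
    if h : w ∈ F' then (e.symm ⟨w, h⟩).1 else w
  have fT : ∀ w (h : w ∈ T), f w = (e ⟨w, h⟩).1 := fun w h => by simp [f, h]
  have fF : ∀ w (h : w ∈ F'), f w = (e.symm ⟨w, h⟩).1 := fun w h => by
    have : w ∉ T := fun h' => Finset.disjoint_left.1 hd' h' h
    simp [f, h, this]
  have fN : ∀ w, w ∉ T → w ∉ F' → f w = w := fun w h h' => by simp [f, h, h']
  have mT : ∀ w, w ∈ T → f w ∈ F' := fun w h => by rw [fT w h]; exact (e _).2
  have mF : ∀ w, w ∈ F' → f w ∈ T := fun w h => by rw [fF w h]; exact (e.symm _).2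
  have inv : Function.Involutive f := by
    intro w
    by_cases h : w ∈ T
    · rw [fF _ (mT w h)]
      have : (⟨f w, mT w h⟩ : F') = e ⟨w, h⟩ := Subtype.ext (fT w h)
      rw [this]; simp
    · by_cases h' : w ∈ F'
      · rw [fT _ (mF w h')]
        have : (⟨f w, mF w h'⟩ : T) = e.symm ⟨w, h'⟩ := Subtype.ext (fF w h')
        rw [this]; simp
      · rw [fN w h h', fN w h h']
  refine ⟨inv.toPerm f, F', hF', hcard, ?_, ?_, fN⟩
  · intro g
    exact Finset.sum_nbij' f f mT mF (fun w _ => inv w) (fun w _ => inv w) (fun w _ => rfl)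
  · intro g
    exact Finset.sum_nbij' f f mF mT (fun w _ => inv w) (fun w _ => inv w) (fun w _ => rfl)

/-- bounds for the signed out-degree of a near balanced colouring -/
theorem S_bounds (h0 : 0 ≤ p) (h1 : p ≤ 1) (c : ι → Bool) (δ : ℝ)
    (hδ : ∀ k, bpm (Finset.univ.filter (fun w => ¬ c w = true)).card p k ≤ δ) (hδ0 : 0 ≤ δ)
    (hc1 : (Finset.univ.filter (fun w => c w = true)).card ≤
      (Finset.univ.filter (fun w => ¬ c w = true)).card)
    (hc2 : (Finset.univ.filter (fun w => ¬ c w = true)).card ≤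
      (Finset.univ.filter (fun w => c w = true)).card + 1) :
    Pr p (fun r => S c r ≤ 1) ≤ 1 / 2 + 5 * δ ∧ Pr p (fun r => -1 ≤ S c r) ≤ 1 / 2 + 5 * δ ∧
      Pr p (fun r => S c r ≤ 1 ∧ -1 ≤ S c r) ≤ 3 * δ := by
  have hj := fun j => Pr_S_le h0 h1 c j δ hδ hδ0
  have h3 : Pr p (fun r => S c r ≤ 1 ∧ -1 ≤ S c r) ≤ 3 * δ := by
    have a := Pr_or (p := p) h0 h1 (E := fun r => S c r ≤ 1 ∧ -1 ≤ S c r)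
      (F := fun r => S c r = -1) (G := fun r => S c r = 0 ∨ S c r = 1) (by intro r hr; omega)
    have b := Pr_or (p := p) h0 h1 (E := fun r => S c r = 0 ∨ S c r = 1)
      (F := fun r => S c r = 0) (G := fun r => S c r = 1) (by intro r hr; omega)
    linarith [hj (-1), hj 0, hj 1]
  have h2 : Pr p (fun r => S c r = -2 ∨ S c r = -3) ≤ 2 * δ := by
    have b := Pr_or (p := p) h0 h1 (E := fun r => S c r = -2 ∨ S c r = -3)
      (F := fun r => S c r = -2) (G := fun r => S c r = -3) (by intro r hr; omega)
    linarith [hj (-2), hj (-3)]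
  obtain ⟨π, F', hF', hcard, g1, g2, g3⟩ := exists_swap
    (Finset.univ.filter (fun w => c w = true)) (Finset.univ.filter (fun w => ¬ c w = true))
    (Finset.disjoint_filter_filter_not _ _ _) hc1
  set T := Finset.univ.filter (fun w => c w = true) with hT
  set F := Finset.univ.filter (fun w => ¬ c w = true) with hF
  have hS : ∀ r, S c (fun i => r (π i)) = - S c r - 2 * ∑ w ∈ F \ F', xi r w := by
    intro r
    have e1 : ∀ r : ι → Bool, ∑ w ∈ F, xi r w = ∑ w ∈ F \ F', xi r w + ∑ w ∈ F', xi r w :=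
      fun r => (Finset.sum_sdiff hF').symm
    have e2 : ∑ w ∈ F \ F', xi (fun i => r (π i)) w = ∑ w ∈ F \ F', xi r w := by
      refine Finset.sum_congr rfl fun w hw => ?_
      have hw' := Finset.mem_sdiff.1 hw
      have : π w = w := g3 w (by simpa [hT, hF] using hw'.1) hw'.2
      simp [xi, this]
    have e3 : ∑ w ∈ T, xi (fun i => r (π i)) w = ∑ w ∈ F', xi r w := g1 (xi r)
    have e4 : ∑ w ∈ F', xi (fun i => r (π i)) w = ∑ w ∈ T, xi r w := g2 (xi r)
    unfold S
    rw [← hT, ← hF, e1, e1 r, e2, e3, e4]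
    ring
  have hd0 : ∀ r : ι → Bool, 0 ≤ ∑ w ∈ F \ F', xi r w := fun r => xi_sum_nonneg _ _
  have hd1 : ∀ r : ι → Bool, ∑ w ∈ F \ F', xi r w ≤ 1 := fun r => by
    refine (xi_sum_le _ _).trans ?_
    rw [Finset.card_sdiff_of_subset hF']
    omega
  have p1 : Pr p (fun r => 2 ≤ S c r) ≤ 1 / 2 :=
    Pr_half h0 h1 π _ (by intro r hr; have := hd0 r; have := hd1 r; have := hS r; omega)
  have p2 : Pr p (fun r => S c r ≤ -4) ≤ 1 / 2 :=
    Pr_half h0 h1 π _ (by intro r hr; have := hd0 r; have := hd1 r; have := hS r; omega)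
  refine ⟨?_, ?_, h3⟩
  · have a := Pr_or (p := p) h0 h1 (E := fun r => S c r ≤ 1)
      (F := fun r => S c r ≤ -4) (G := fun r => (S c r = -2 ∨ S c r = -3) ∨
        (S c r ≤ 1 ∧ -1 ≤ S c r)) (by intro r hr; omega)
    have b := Pr_or (p := p) h0 h1 (E := fun r => (S c r = -2 ∨ S c r = -3) ∨
        (S c r ≤ 1 ∧ -1 ≤ S c r)) (F := fun r => S c r = -2 ∨ S c r = -3)
        (G := fun r => S c r ≤ 1 ∧ -1 ≤ S c r) (by intro r hr; omega)
    linarith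
  · have a := Pr_or (p := p) h0 h1 (E := fun r => -1 ≤ S c r)
      (F := fun r => 2 ≤ S c r) (G := fun r => (S c r ≤ 1 ∧ -1 ≤ S c r)) (by intro r hr; omega)
    linarith

end

end MajBis

namespace MajBis

/-- One-sided exponential moment bound for Lipschitz functions of independent variables. -/
theorem mcd {Ω : Type*} [Fintype Ω] (μ : Ω → ℝ) (hμ : ∀ a, 0 ≤ μ a) (hμ1 : ∑ a, μ a = 1)
    (t : ℝ) (ht0 : 0 ≤ t) (ht1 : t ≤ 1) :
    ∀ (n : ℕ) (f : (Fin n → Ω) → ℝ),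
      (∀ x y : Fin n → Ω, ∀ i, (∀ j, j ≠ i → x j = y j) → f x ≤ f y + 1) →
      ∑ x, (∏ i, μ (x i)) * Real.exp (-t * f x) ≤
        Real.exp (-t * ∑ x, (∏ i, μ (x i)) * f x + t ^ 2 * n) := by
  intro n
  induction n with
  | zero =>
    intro f _
    simp
  | succ n ih =>
    intro f hf
    have split : ∀ h : (Fin (n + 1) → Ω) → ℝ, ∑ x, (∏ i, μ (x i)) * h x =
        ∑ y : Fin n → Ω, (∏ i, μ (y i)) * ∑ a, μ a * h (Fin.cons a y) := by
      intro h
      rw [← (Fin.consEquiv (fun _ => Ω)).sum_comp, Fintype.sum_prod_type, Finset.sum_comm]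
      refine Finset.sum_congr rfl fun y _ => ?_
      rw [Finset.mul_sum]
      refine Finset.sum_congr rfl fun a _ => ?_
      simp only [Fin.consEquiv, Equiv.coe_fn_mk, Fin.prod_univ_succ, Fin.cons_zero, Fin.cons_succ]
      ring
    rw [split, split]
    set g : (Fin n → Ω) → ℝ := fun y => ∑ a, μ a * f (Fin.cons a y) with hg
    have hgl : ∀ x y : Fin n → Ω, ∀ i, (∀ j, j ≠ i → x j = y j) → g x ≤ g y + 1 := by
      intro x y i hxy
      have : g y + 1 = ∑ a, μ a * (f (Fin.cons a y) + 1) := by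
        simp only [mul_add, mul_one, Finset.sum_add_distrib, hμ1, hg]
      rw [this]
      refine Finset.sum_le_sum fun a _ => mul_le_mul_of_nonneg_left ?_ (hμ a)
      refine hf _ _ i.succ fun j hj => ?_
      refine Fin.cases ?_ (fun j hj => ?_) j hj
      · intro _; simp
      · simp only [Fin.cons_succ]
        exact hxy j (fun h => hj (by rw [h]))
    have hone : ∀ y : Fin n → Ω, ∑ a, μ a * Real.exp (-t * f (Fin.cons a y)) ≤
        Real.exp (-t * g y) * Real.exp (t ^ 2) := by
      intro y
      have hab : ∀ a b, f (Fin.cons a y) ≤ f (Fin.cons b y) + 1 := fun a b =>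
        hf _ _ 0 fun j hj => by
          obtain ⟨k, rfl⟩ := Fin.exists_succ_eq.2 hj
          simp
      have hd : ∀ a, |f (Fin.cons a y) - g y| ≤ 1 := by
        intro a
        rw [abs_le]
        have e1 : f (Fin.cons a y) - 1 = ∑ b, μ b * (f (Fin.cons a y) - 1) := by
          rw [← Finset.sum_mul, hμ1, one_mul]
        have e2 : f (Fin.cons a y) + 1 = ∑ b, μ b * (f (Fin.cons a y) + 1) := by
          rw [← Finset.sum_mul, hμ1, one_mul]
        have l1 : f (Fin.cons a y) - 1 ≤ g y := by
          rw [e1]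
          exact Finset.sum_le_sum fun b _ => mul_le_mul_of_nonneg_left
            (by linarith [hab a b]) (hμ b)
        have l2 : g y ≤ f (Fin.cons a y) + 1 := by
          rw [e2]
          exact Finset.sum_le_sum fun b _ => mul_le_mul_of_nonneg_left
            (by linarith [hab b a]) (hμ b)
        constructor <;> linarith
      have hterm : ∀ a, Real.exp (-t * f (Fin.cons a y)) ≤
          Real.exp (-t * g y) * (1 + (-t) * (f (Fin.cons a y) - g y) + t ^ 2) := by
        intro a
        have : -t * f (Fin.cons a y) = -t * g y + (-t) * (f (Fin.cons a y) - g y) := by ring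
        rw [this, Real.exp_add]
        refine mul_le_mul_of_nonneg_left ?_ (Real.exp_pos _).le
        have habs : |(-t) * (f (Fin.cons a y) - g y)| ≤ t := by
          rw [abs_mul, abs_neg, abs_of_nonneg ht0]
          exact mul_le_of_le_one_right ht0 (hd a)
        have h1 := (abs_le.1 (Real.abs_exp_sub_one_sub_id_le (habs.trans ht1))).2
        have h2 : ((-t) * (f (Fin.cons a y) - g y)) ^ 2 ≤ t ^ 2 := by
          rw [← sq_abs]
          exact pow_le_pow_left₀ (abs_nonneg _) habs 2
        linarith
      calc _ ≤ ∑ a, μ a * (Real.exp (-t * g y) * (1 + (-t) * (f (Fin.cons a y) - g y) + t ^ 2)) :=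
            Finset.sum_le_sum fun a _ => mul_le_mul_of_nonneg_left (hterm a) (hμ a)
        _ = Real.exp (-t * g y) * ((1 + t * g y + t ^ 2) * ∑ a, μ a - t * g y) := by
            generalize Real.exp (-t * g y) = E
            have e1 : E * (t * g y) = ∑ a, E * t * (μ a * f (Fin.cons a y)) := by
              rw [← Finset.mul_sum]; simp only [hg]; ring
            rw [mul_sub, e1, ← mul_assoc, Finset.mul_sum, ← Finset.sum_sub_distrib]
            exact Finset.sum_congr rfl fun a _ => by ring
        _ ≤ _ := by
            refine mul_le_mul_of_nonneg_left ?_ (Real.exp_pos _).le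
            rw [hμ1]
            linarith [Real.add_one_le_exp (t ^ 2)]
    have hw : ∀ y : Fin n → Ω, 0 ≤ ∏ i, μ (y i) := fun y => Finset.prod_nonneg fun _ _ => hμ _
    calc _ ≤ ∑ y : Fin n → Ω, (∏ i, μ (y i)) * (Real.exp (-t * g y) * Real.exp (t ^ 2)) :=
          Finset.sum_le_sum fun y _ => mul_le_mul_of_nonneg_left (hone y) (hw y)
      _ = (∑ y : Fin n → Ω, (∏ i, μ (y i)) * Real.exp (-t * g y)) * Real.exp (t ^ 2) := by
          rw [Finset.sum_mul]; exact Finset.sum_congr rfl fun _ _ => by ring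
      _ ≤ Real.exp (-t * ∑ y, (∏ i, μ (y i)) * g y + t ^ 2 * n) * Real.exp (t ^ 2) :=
          mul_le_mul_of_nonneg_right (ih g hgl) (Real.exp_pos _).le
      _ = _ := by
          rw [← Real.exp_add]; congr 1; push_cast; ring

/-- row version of the majority property -/
def Mj {n : ℕ} (r : Fin n → Bool) (c : Fin n → Bool) (v : Fin n) : Prop :=
  MajorityAt (fun _ => r) c v

theorem Mj_iff {n : ℕ} (r c : Fin n → Bool) (v : Fin n) :
    Mj r c v ↔ ∑ w ∈ Finset.univ.filter (fun w => v ≠ w ∧ c w = c v), xi r w ≤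
      ∑ w ∈ Finset.univ.filter (fun w => ¬ c w = c v), xi r w := by
  classical
  have e1 : (({w | DiAdj (fun _ => r) v w ∧ c w = c v} : Set (Fin n)).ncard : ℤ) =
      ∑ w ∈ Finset.univ.filter (fun w => v ≠ w ∧ c w = c v), xi r w := by
    have : ({w | DiAdj (fun _ => r) v w ∧ c w = c v} : Set (Fin n)) =
      ↑((Finset.univ.filter (fun w => v ≠ w ∧ c w = c v)).filter fun w => r w = true) := by
      ext w; simp [DiAdj]; tauto
    rw [this, Set.ncard_coe_finset, Finset.card_filter]
    simp [xi]
  have e2 : (({w | DiAdj (fun _ => r) v w} : Set (Fin n)).ncard : ℤ) =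
      ∑ w ∈ Finset.univ.filter (fun w => v ≠ w ∧ c w = c v), xi r w +
      ∑ w ∈ Finset.univ.filter (fun w => ¬ c w = c v), xi r w := by
    have hdis : Disjoint (Finset.univ.filter (fun w => v ≠ w ∧ c w = c v))
      (Finset.univ.filter (fun w => ¬ c w = c v)) := by
      rw [Finset.disjoint_left]; intro w; simp
    rw [← Finset.sum_union hdis]
    have : ({w | DiAdj (fun _ => r) v w} : Set (Fin n)) =
      ↑(((Finset.univ.filter (fun w => v ≠ w ∧ c w = c v)) ∪
      (Finset.univ.filter (fun w => ¬ c w = c v))).filter fun w => r w = true) := by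
      ext w
      simp only [DiAdj, Set.mem_ofPred_eq, Finset.coe_filter, Finset.mem_union, Finset.mem_filter,
        Finset.mem_univ, true_and]
      have : ¬ c w = c v → v ≠ w := fun h h' => h (by rw [h'])
      tauto
    rw [this, Set.ncard_coe_finset, Finset.card_filter]
    simp [xi]
  unfold Mj MajorityAt
  zify
  rw [e1, e2]
  constructor <;> intro h <;> linarith

/-- the colourings we use: exactly `n / 2` vertices are `true`. -/
def Bs (n : ℕ) : Finset (Fin n → Bool) :=
  Finset.univ.filter fun c => (Finset.univ.filter fun w => c w = true).card = n / 2

theorem card_Bs (n : ℕ) : (Bs n).card = n.choose (n / 2) := by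
  unfold Bs
  rw [card_count]; simp

theorem Bs_true {n : ℕ} {c : Fin n → Bool} (hc : c ∈ Bs n) :
    (Finset.univ.filter fun w => c w = true).card = n / 2 := by
  simpa [Bs] using hc

theorem Bs_false {n : ℕ} {c : Fin n → Bool} (hc : c ∈ Bs n) :
    (Finset.univ.filter fun w => ¬ c w = true).card = n - n / 2 := by
  have := Finset.card_filter_add_card_filter_not (s := Finset.univ) (fun i => c i = true)
  rw [Bs_true hc] at this
  simp only [Finset.card_univ, Fintype.card_fin] at this
  omega

theorem Bs_bis {n : ℕ} {c : Fin n → Bool} (hc : c ∈ Bs n) : IsBisection c := by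
  unfold IsBisection
  have e1 : ({v | c v = true} : Set (Fin n)) = ↑(Finset.univ.filter fun w => c w = true) := by simp
  have e2 : ({v | c v = false} : Set (Fin n)) = ↑(Finset.univ.filter fun w => ¬ c w = true) := by
    simp
  rw [e1, e2, Set.ncard_coe_finset, Set.ncard_coe_finset, Bs_true hc, Bs_false hc, abs_le]
  omega

/-- each vertex is majority coloured with probability at least one half -/
theorem Mj_half {n : ℕ} {p : ℝ} (h0 : 0 ≤ p) (h1 : p ≤ 1) {c : Fin n → Bool} (hc : c ∈ Bs n)
    (v : Fin n) : 1 / 2 ≤ Pr p (fun r => Mj r c v) := by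
  have hT := Bs_true hc
  have hF := Bs_false hc
  have hn : 0 < n := v.pos
  have hA : (Finset.univ.filter (fun w => v ≠ w ∧ c w = c v)).card + 1 =
      (Finset.univ.filter (fun w => c w = c v)).card := by
    have : Finset.univ.filter (fun w => v ≠ w ∧ c w = c v) =
        (Finset.univ.filter (fun w => c w = c v)).erase v := by
      ext w; simp; tauto
    rw [this, Finset.card_erase_add_one (by simp)]
  have hcard : (Finset.univ.filter (fun w => v ≠ w ∧ c w = c v)).card ≤
      (Finset.univ.filter (fun w => ¬ c w = c v)).card := by
    cases hv : c v
    · rw [hv] at hA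
      simp only [Bool.not_eq_true, Bool.not_eq_false] at *
      omega
    · rw [hv] at hA
      omega
  have hdis : Disjoint (Finset.univ.filter (fun w => v ≠ w ∧ c w = c v))
      (Finset.univ.filter (fun w => ¬ c w = c v)) := by
    rw [Finset.disjoint_left]; intro w; simp
  obtain ⟨π, F', hF', -, g1, g2, -⟩ := exists_swap _ _ hdis hcard
  have hh : Pr p (fun r => ¬ Mj r c v) ≤ 1 / 2 := by
    refine Pr_half h0 h1 π _ fun r hr => ?_
    rw [Mj_iff] at hr
    rw [not_not, Mj_iff]
    have e3 := g1 (xi r)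
    have e4 := g2 (xi r)
    change ∑ w ∈ _, xi (fun i => r (π i)) w = _ at e3
    change ∑ w ∈ _, xi (fun i => r (π i)) w = _ at e4
    have l1 : ∀ r : Fin n → Bool, ∑ w ∈ F', xi r w ≤
        ∑ w ∈ Finset.univ.filter (fun w => ¬ c w = c v), xi r w := fun r =>
      Finset.sum_le_sum_of_subset_of_nonneg hF' fun _ _ _ => by unfold xi; split_ifs <;> simp
    have := l1 r
    have := l1 (fun i => r (π i))
    rw [e3]
    omega
  have := Pr_not (p := p) (fun r => Mj r c v)
  linarith

theorem Mj_S {n : ℕ} {r c : Fin n → Bool} {v : Fin n} (h : Mj r c v) :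
    (c v = true → S c r ≤ 1) ∧ (c v = false → -1 ≤ S c r) := by
  rw [Mj_iff] at h
  have e : ∑ w ∈ Finset.univ.filter (fun w => c w = c v), xi r w ≤
      ∑ w ∈ Finset.univ.filter (fun w => v ≠ w ∧ c w = c v), xi r w + 1 := by
    have : Finset.univ.filter (fun w => v ≠ w ∧ c w = c v) =
        (Finset.univ.filter (fun w => c w = c v)).erase v := by
      ext w; simp; tauto
    rw [this, ← Finset.sum_erase_add _ _ (show v ∈ Finset.univ.filter (fun w => c w = c v) by simp)]
    have : xi r v ≤ 1 := by unfold xi; split_ifs <;> simp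
    linarith
  unfold S
  constructor
  · intro hv
    rw [hv] at h e
    omega
  · intro hv
    rw [hv] at h e
    simp only [Bool.not_eq_true, Bool.not_eq_false] at *
    omega

end MajBis

namespace MajBis

theorem joint {n : ℕ} {p : ℝ} (h0 : 0 ≤ p) (h1 : p ≤ 1) {δ : ℝ} (hδ0 : 0 ≤ δ)
    (hδ : ∀ k, bpm (n - n / 2) p k ≤ δ) {c d : Fin n → Bool} (hc : c ∈ Bs n) (hd : d ∈ Bs n) :
    ∃ a b : ℝ, 0 ≤ a ∧ 0 ≤ b ∧ a + b ≤ 1 / 2 + 8 * δ ∧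
      ∀ v, Pr p (fun r => Mj r c v ∧ Mj r d v) ≤ if c v = d v then a else b := by
  have bounds : ∀ c ∈ Bs n, Pr p (fun r => S c r ≤ 1) ≤ 1 / 2 + 5 * δ ∧
      Pr p (fun r => -1 ≤ S c r) ≤ 1 / 2 + 5 * δ ∧
      Pr p (fun r => S c r ≤ 1 ∧ -1 ≤ S c r) ≤ 3 * δ := by
    intro c hc
    have hT := Bs_true hc
    have hF := Bs_false hc
    exact S_bounds h0 h1 c δ (by rw [hF]; exact hδ) hδ0 (by omega) (by omega)
  obtain ⟨c1, c2, c3⟩ := bounds c hc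
  obtain ⟨d1, d2, d3⟩ := bounds d hd
  have comm : ∀ U V : (Fin n → Bool) → Prop,
      Pr p (fun r => U r ∧ V r) = Pr p (fun r => V r ∧ U r) := fun U V =>
    le_antisymm (Pr_mono h0 h1 fun _ h => h.symm) (Pr_mono h0 h1 fun _ h => h.symm)
  have t1 := Pr_two (p := p) h0 h1 (fun r => S c r ≤ 1) (fun r => S d r ≤ 1) (fun r => -1 ≤ S d r)
  have t2 := Pr_two (p := p) h0 h1 (fun r => -1 ≤ S c r) (fun r => S d r ≤ 1) (fun r => -1 ≤ S d r)
  have t3 := Pr_two (p := p) h0 h1 (fun r => S d r ≤ 1) (fun r => S c r ≤ 1) (fun r => -1 ≤ S c r)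
  have t4 := Pr_two (p := p) h0 h1 (fun r => -1 ≤ S d r) (fun r => S c r ≤ 1) (fun r => -1 ≤ S c r)
  rw [comm (fun r => S d r ≤ 1) (fun r => S c r ≤ 1),
    comm (fun r => S d r ≤ 1) (fun r => -1 ≤ S c r)] at t3
  rw [comm (fun r => -1 ≤ S d r) (fun r => S c r ≤ 1),
    comm (fun r => -1 ≤ S d r) (fun r => -1 ≤ S c r)] at t4
  set a1 := Pr p (fun r => S c r ≤ 1 ∧ S d r ≤ 1) with ha1
  set a2 := Pr p (fun r => -1 ≤ S c r ∧ -1 ≤ S d r) with ha2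
  set b1 := Pr p (fun r => S c r ≤ 1 ∧ -1 ≤ S d r) with hb1
  set b2 := Pr p (fun r => -1 ≤ S c r ∧ S d r ≤ 1) with hb2
  refine ⟨max a1 a2, max b1 b2, le_max_of_le_left (Pr_nonneg h0 h1 _),
    le_max_of_le_left (Pr_nonneg h0 h1 _), ?_, ?_⟩
  · rcases max_cases a1 a2 with ⟨h, _⟩ | ⟨h, _⟩ <;> rcases max_cases b1 b2 with ⟨h', _⟩ | ⟨h', _⟩ <;>
      rw [h, h'] <;> linarith
  · intro v
    cases hcv : c v <;> cases hdv : d v <;> simp only [if_true, if_false, reduceCtorEq]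
    · exact le_max_of_le_right (Pr_mono h0 h1 fun r hr => ⟨(Mj_S hr.1).2 hcv, (Mj_S hr.2).2 hdv⟩)
    · exact le_max_of_le_right (Pr_mono h0 h1 fun r hr => ⟨(Mj_S hr.1).2 hcv, (Mj_S hr.2).1 hdv⟩)
    · exact le_max_of_le_left (Pr_mono h0 h1 fun r hr => ⟨(Mj_S hr.1).1 hcv, (Mj_S hr.2).2 hdv⟩)
    · exact le_max_of_le_left (Pr_mono h0 h1 fun r hr => ⟨(Mj_S hr.1).1 hcv, (Mj_S hr.2).1 hdv⟩)

theorem joint_prod {n : ℕ} {p : ℝ} (h0 : 0 ≤ p) (h1 : p ≤ 1) {δ : ℝ} (hδ0 : 0 ≤ δ)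
    (hδ : ∀ k, bpm (n - n / 2) p k ≤ δ) {c d : Fin n → Bool} (hc : c ∈ Bs n) (hd : d ∈ Bs n) :
    ∏ v, Pr p (fun r => Mj r c v ∧ Mj r d v) ≤
      (1 / 2 + 8 * δ) ^ n * (1 / (n.choose (Finset.univ.filter fun v => (c v == d v) = true).card : ℝ)) := by
  obtain ⟨a, b, ha, hb, hab, hv⟩ := joint h0 h1 hδ0 hδ hc hd
  set k := (Finset.univ.filter fun v => (c v == d v) = true).card with hk
  have hkn : k ≤ n := by
    have := Finset.card_filter_le (Finset.univ : Finset (Fin n)) (fun v => (c v == d v) = true)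
    simpa [hk] using this
  have e1 : ∏ v, Pr p (fun r => Mj r c v ∧ Mj r d v) ≤ a ^ k * b ^ (n - k) := by
    calc _ ≤ ∏ v, (if c v = d v then a else b) :=
          Finset.prod_le_prod (fun _ _ => Pr_nonneg h0 h1 _) fun v _ => hv v
      _ = _ := by
          rw [Finset.prod_ite, Finset.prod_const, Finset.prod_const]
          have e : (Finset.univ.filter fun v => c v = d v).card = k := by simp [hk]
          have := Finset.card_filter_add_card_filter_not (s := Finset.univ) (fun v => c v = d v)
          simp only [Finset.card_univ, Fintype.card_fin] at this
          rw [e] at this ⊢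
          congr 2
          omega
  have hpos : (0 : ℝ) < n.choose k := by exact_mod_cast Nat.choose_pos hkn
  have e2 : a ^ k * b ^ (n - k) * n.choose k ≤ (a + b) ^ n := by
    rw [add_pow]
    exact Finset.single_le_sum (f := fun m => a ^ m * b ^ (n - m) * (n.choose m : ℝ))
      (fun i _ => by positivity) (Finset.mem_range.2 (by omega))
  have e3 : (a + b) ^ n ≤ (1 / 2 + 8 * δ) ^ n := pow_le_pow_left₀ (by positivity) hab n
  rw [mul_one_div, le_div_iff₀ hpos]
  calc _ ≤ a ^ k * b ^ (n - k) * n.choose k := mul_le_mul_of_nonneg_right e1 hpos.le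
    _ ≤ _ := e2.trans e3

theorem sum_inv_choose (n : ℕ) (c : Fin n → Bool) :
    ∑ d : Fin n → Bool,
      (1 / (n.choose (Finset.univ.filter fun v => (c v == d v) = true).card : ℝ)) = n + 1 := by
  classical
  have inv : Function.Involutive (fun (d : Fin n → Bool) v => (c v == d v)) := by
    intro d; funext v; cases h : c v <;> cases h' : d v <;> simp [h, h']
  have : ∑ d : Fin n → Bool,
      (1 / (n.choose (Finset.univ.filter fun v => (c v == d v) = true).card : ℝ)) =
      ∑ x : Fin n → Bool, (1 / (n.choose (Finset.univ.filter fun v => x v = true).card : ℝ)) :=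
    Fintype.sum_equiv inv.toPerm _ _ fun d => rfl
  rw [this]
  rw [← Finset.sum_fiberwise_of_maps_to (s := Finset.univ) (t := Finset.range (n + 1))
    (g := fun x : Fin n → Bool => (Finset.univ.filter fun v => x v = true).card)]
  · rw [Finset.sum_congr rfl (g := fun _ => (1 : ℝ))]
    · simp
    · intro k hk
      have hkn : k ≤ n := by simpa [Nat.lt_succ_iff] using hk
      have hpos : (0 : ℝ) < n.choose k := by exact_mod_cast Nat.choose_pos hkn
      rw [Finset.sum_congr rfl (g := fun _ => 1 / (n.choose k : ℝ))]
      · rw [Finset.sum_const, card_count]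
        simp only [Fintype.card_fin, nsmul_eq_mul]
        field_simp
      · intro x hx
        simp only [Finset.mem_filter, Finset.mem_univ, true_and] at hx
        rw [hx]
  · intro x _
    have := Finset.card_filter_le (Finset.univ : Finset (Fin n)) (fun v => x v = true)
    simp only [Finset.card_univ, Fintype.card_fin] at this
    exact Finset.mem_range.2 (by omega)

/-- weight of a matrix -/
noncomputable def MW {n : ℕ} (p : ℝ) (A : Fin n → Fin n → Bool) : ℝ := ∏ v, W p (A v)

theorem MW_nonneg {n : ℕ} {p : ℝ} (h0 : 0 ≤ p) (h1 : p ≤ 1) (A : Fin n → Fin n → Bool) :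
    0 ≤ MW p A := Finset.prod_nonneg fun _ _ => W_nonneg h0 h1 _

theorem MW_sum {n : ℕ} {p : ℝ} : ∑ A : Fin n → Fin n → Bool, MW p A = 1 := by
  unfold MW
  rw [sum_prod_eq (fun (_ : Fin n) r => W p r), W_sum]
  simp

open Classical in
/-- indicator of an event -/
noncomputable def ind (P : Prop) : ℝ := if P then 1 else 0

theorem MW_event {n : ℕ} {p : ℝ} (E : Fin n → (Fin n → Bool) → Prop) :
    ∑ A : Fin n → Fin n → Bool, MW p A * ind (∀ v, E v (A v)) = ∏ v, Pr p (E v) := by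
  classical
  unfold Pr
  rw [← sum_prod_eq (fun v r => if E v r then W p r else 0)]
  refine Finset.sum_congr rfl fun A _ => ?_
  unfold ind MW
  by_cases h : ∀ v, E v (A v)
  · simp [h]
  · simp only [h, if_false, mul_zero]
    push Not at h
    obtain ⟨v, hv⟩ := h
    exact (Finset.prod_eq_zero (Finset.mem_univ v) (by simp [hv])).symm

/-- the event that there is a perfect majority bisection -/
def Good {n : ℕ} (A : Fin n → Fin n → Bool) : Prop := ∃ c ∈ Bs n, ∀ v, Mj (A v) c v

theorem second_moment {n : ℕ} {p : ℝ} (h0 : 0 ≤ p) (h1 : p ≤ 1) {δ : ℝ} (hδ0 : 0 ≤ δ)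
    (hδ : ∀ k, bpm (n - n / 2) p k ≤ δ) :
    1 ≤ (∑ A : Fin n → Fin n → Bool, MW p A * ind (Good A)) *
      ((n + 1) ^ 2 * (1 + 16 * δ) ^ n) := by
  classical
  set X : (Fin n → Fin n → Bool) → ℝ := fun A => ∑ c ∈ Bs n, ind (∀ v, Mj (A v) c v) with hX
  set P0 := ∑ A : Fin n → Fin n → Bool, MW p A * ind (Good A) with hP0
  have cs : (∑ A, MW p A * X A) ^ 2 ≤ P0 * ∑ A, MW p A * X A ^ 2 := by
    refine Finset.sum_sq_le_sum_mul_sum_of_sq_le_mul _ ?_ ?_ fun A hA => le_of_eq ?_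
    · intro A _
      refine mul_nonneg (MW_nonneg h0 h1 A) ?_
      unfold ind; split_ifs <;> simp
    · intro A _
      exact mul_nonneg (MW_nonneg h0 h1 A) (sq_nonneg _)
    · by_cases hA : Good A
      · simp [ind, hA]; ring
      · have : X A = 0 := by
          refine Finset.sum_eq_zero fun c hc => ?_
          have : ¬ ∀ v, Mj (A v) c v := fun h => hA ⟨c, hc, h⟩
          simp [ind, this]
        simp [this]
  set N : ℝ := ((Bs n).card : ℝ) with hN
  have m1 : N * (1 / 2) ^ n ≤ ∑ A, MW p A * X A := by
    have : ∑ A, MW p A * X A = ∑ c ∈ Bs n, ∏ v, Pr p (fun r => Mj r c v) := by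
      simp only [hX, Finset.mul_sum]
      rw [Finset.sum_comm]
      exact Finset.sum_congr rfl fun c _ => MW_event (fun v r => Mj r c v)
    rw [this, hN, ← nsmul_eq_mul]
    refine Finset.card_nsmul_le_sum _ _ _ fun c hc => ?_
    calc ((1:ℝ) / 2) ^ n = ∏ v : Fin n, (1 / 2 : ℝ) := by simp
      _ ≤ _ := Finset.prod_le_prod (fun _ _ => by norm_num) fun v _ => Mj_half h0 h1 hc v
  have m2 : ∑ A, MW p A * X A ^ 2 ≤ N * ((1 / 2 + 8 * δ) ^ n * (n + 1)) := by
    have : ∑ A, MW p A * X A ^ 2 =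
        ∑ c ∈ Bs n, ∑ d ∈ Bs n, ∏ v, Pr p (fun r => Mj r c v ∧ Mj r d v) := by
      have e : ∀ A, MW p A * X A ^ 2 =
          ∑ c ∈ Bs n, ∑ d ∈ Bs n, MW p A * ind (∀ v, Mj (A v) c v ∧ Mj (A v) d v) := by
        intro A
        rw [hX, sq, Finset.sum_mul_sum, Finset.mul_sum]
        refine Finset.sum_congr rfl fun c _ => ?_
        rw [Finset.mul_sum]
        refine Finset.sum_congr rfl fun d _ => ?_
        congr 1
        unfold ind
        rw [forall_and]
        by_cases h1 : ∀ v, Mj (A v) c v <;> by_cases h2 : ∀ v, Mj (A v) d v <;> simp [h1, h2]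
      rw [Finset.sum_congr rfl fun A _ => e A, Finset.sum_comm]
      refine Finset.sum_congr rfl fun c _ => ?_
      rw [Finset.sum_comm]
      exact Finset.sum_congr rfl fun d _ => MW_event (fun v r => Mj r c v ∧ Mj r d v)
    rw [this, hN, ← nsmul_eq_mul]
    refine Finset.sum_le_card_nsmul _ _ _ fun c hc => ?_
    rw [← sum_inv_choose n c, Finset.mul_sum]
    calc _ ≤ ∑ d ∈ Bs n, (1 / 2 + 8 * δ) ^ n *
          (1 / (n.choose (Finset.univ.filter fun v => (c v == d v) = true).card : ℝ)) :=
          Finset.sum_le_sum fun d hd => joint_prod h0 h1 hδ0 hδ hc hd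
      _ ≤ _ := Finset.sum_le_sum_of_subset_of_nonneg (Finset.subset_univ _)
          fun _ _ _ => by positivity
  have hN2 : (2 : ℝ) ^ n ≤ N * (n + 1) := by
    have : 2 ^ n ≤ (Bs n).card * (n + 1) := by
      rw [← Nat.sum_range_choose, card_Bs]
      calc _ ≤ ∑ k ∈ Finset.range (n + 1), n.choose (n / 2) :=
            Finset.sum_le_sum fun k _ => Nat.choose_le_middle k n
        _ = _ := by simp [mul_comm]
    rw [hN]; exact_mod_cast this
  have hNpos : 0 < N := by
    have : (0 : ℝ) < 2 ^ n := by positivity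
    have h3 : (0 : ℝ) < n + 1 := by positivity
    by_contra hh
    nlinarith
  have hP0n : 0 ≤ P0 := Finset.sum_nonneg fun A _ => mul_nonneg (MW_nonneg h0 h1 A)
    (by unfold ind; split_ifs <;> simp)
  have k1 : (N * (1 / 2) ^ n) ^ 2 ≤ P0 * (N * ((1 / 2 + 8 * δ) ^ n * (n + 1))) :=
    (pow_le_pow_left₀ (by positivity) m1 2).trans
      (cs.trans (mul_le_mul_of_nonneg_left m2 hP0n))
  have k2 : N * ((1 / 2) ^ n * (1 / 2) ^ n) ≤ P0 * ((1 / 2 + 8 * δ) ^ n * (n + 1)) := by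
    refine le_of_mul_le_mul_left ?_ hNpos
    calc _ = (N * (1 / 2) ^ n) ^ 2 := by ring
      _ ≤ _ := k1
      _ = _ := by ring
  have k3 : (1 / 2 : ℝ) ^ n ≤ P0 * ((1 / 2 + 8 * δ) ^ n * (n + 1) ^ 2) := by
    calc (1 / 2 : ℝ) ^ n = 2 ^ n * ((1 / 2) ^ n * (1 / 2) ^ n) := by
          rw [← mul_assoc, ← mul_pow]; norm_num
      _ ≤ N * (n + 1) * ((1 / 2) ^ n * (1 / 2) ^ n) :=
          mul_le_mul_of_nonneg_right hN2 (by positivity)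
      _ = N * ((1 / 2) ^ n * (1 / 2) ^ n) * (n + 1) := by ring
      _ ≤ P0 * ((1 / 2 + 8 * δ) ^ n * (n + 1)) * (n + 1) :=
          mul_le_mul_of_nonneg_right k2 (by positivity)
      _ = _ := by ring
  calc (1 : ℝ) = 2 ^ n * (1 / 2) ^ n := by rw [← mul_pow]; norm_num
    _ ≤ 2 ^ n * (P0 * ((1 / 2 + 8 * δ) ^ n * (n + 1) ^ 2)) :=
        mul_le_mul_of_nonneg_left k3 (by positivity)
    _ = P0 * ((n + 1) ^ 2 * (2 * (1 / 2 + 8 * δ)) ^ n) := by rw [mul_pow]; ring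
    _ = _ := by ring_nf

open Classical in
/-- set of bad vertices -/
noncomputable def badS {n : ℕ} (A : Fin n → Fin n → Bool) (c : Fin n → Bool) : Finset (Fin n) :=
  Finset.univ.filter fun v => ¬ Mj (A v) c v

theorem Bs_nonempty (n : ℕ) : (Bs n).Nonempty := by
  rw [← Finset.card_pos, card_Bs]
  exact Nat.choose_pos (Nat.div_le_self _ _)

/-- minimal number of bad vertices -/
noncomputable def fmin {n : ℕ} (A : Fin n → Fin n → Bool) : ℝ :=
  (Bs n).inf' (Bs_nonempty n) fun c => ((badS A c).card : ℝ)

theorem fmin_nonneg {n : ℕ} (A : Fin n → Fin n → Bool) : 0 ≤ fmin A :=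
  Finset.le_inf' _ _ fun _ _ => by positivity

theorem fmin_lip {n : ℕ} (x y : Fin n → Fin n → Bool) (i : Fin n)
    (h : ∀ j, j ≠ i → x j = y j) : fmin x ≤ fmin y + 1 := by
  classical
  obtain ⟨c, hc, he⟩ := Finset.exists_mem_eq_inf' (Bs_nonempty n) fun c => ((badS y c).card : ℝ)
  have h1 : fmin x ≤ ((badS x c).card : ℝ) := Finset.inf'_le _ hc
  have h2 : badS x c ⊆ insert i (badS y c) := by
    intro v hv
    by_cases hvi : v = i
    · simp [hvi]
    · simp only [badS, Finset.mem_filter, Finset.mem_univ, true_and, Finset.mem_insert] at hv ⊢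
      right; rw [← h v hvi]; exact hv
  have h3 : (badS x c).card ≤ (badS y c).card + 1 :=
    (Finset.card_le_card h2).trans (Finset.card_insert_le _ _)
  have h4 : ((badS x c).card : ℝ) ≤ (badS y c).card + 1 := by exact_mod_cast h3
  have h5 : fmin y = ((badS y c).card : ℝ) := he
  linarith

theorem mean_bound {n : ℕ} {p : ℝ} (h0 : 0 ≤ p) (h1 : p ≤ 1) {δ : ℝ} (hδ0 : 0 ≤ δ)
    (hδ : ∀ k, bpm (n - n / 2) p k ≤ δ) (t : ℝ) (ht0 : 0 < t) (ht1 : t ≤ 1) :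
    t * ∑ A : Fin n → Fin n → Bool, MW p A * fmin A ≤
      t ^ 2 * n + 16 * δ * n + 2 * Real.log (n + 1) := by
  have sm := second_moment h0 h1 hδ0 hδ
  have mc := mcd (W p) (W_nonneg h0 h1) W_sum t ht0.le ht1 n fmin fmin_lip
  change ∑ A : Fin n → Fin n → Bool, MW p A * Real.exp (-t * fmin A) ≤
    Real.exp (-t * ∑ A : Fin n → Fin n → Bool, MW p A * fmin A + t ^ 2 * n) at mc
  set Ef := ∑ A : Fin n → Fin n → Bool, MW p A * fmin A
  have hP : ∑ A : Fin n → Fin n → Bool, MW p A * ind (Good A) ≤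
      ∑ A : Fin n → Fin n → Bool, MW p A * Real.exp (-t * fmin A) := by
    refine Finset.sum_le_sum fun A _ => mul_le_mul_of_nonneg_left ?_ (MW_nonneg h0 h1 A)
    unfold ind
    split_ifs with hA
    · obtain ⟨c, hc, hv⟩ := hA
      have l1 : fmin A ≤ ((badS A c).card : ℝ) := Finset.inf'_le _ hc
      have l2 : badS A c = ∅ := by simp [badS, hv]
      rw [l2] at l1
      have := fmin_nonneg A
      have : fmin A = 0 := le_antisymm (by simpa using l1) this
      simp [this]
    · exact (Real.exp_pos _).le
  have hpow : (1 + 16 * δ) ^ n ≤ Real.exp (16 * δ * n) := by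
    have : 1 + 16 * δ ≤ Real.exp (16 * δ) := by linarith [Real.add_one_le_exp (16 * δ)]
    calc _ ≤ Real.exp (16 * δ) ^ n := pow_le_pow_left₀ (by positivity) this n
      _ = _ := by rw [← Real.exp_nat_mul]; ring_nf
  have hn1 : (0 : ℝ) < n + 1 := by positivity
  have hlog : ((n : ℝ) + 1) ^ 2 = Real.exp (2 * Real.log (n + 1)) := by
    rw [two_mul, Real.exp_add, Real.exp_log hn1, sq]
  have fin1 : (1 : ℝ) ≤ Real.exp (-t * Ef + t ^ 2 * n) *
      (Real.exp (2 * Real.log (n + 1)) * Real.exp (16 * δ * n)) := by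
    rw [← hlog]
    refine sm.trans ?_
    exact mul_le_mul (hP.trans mc) (mul_le_mul_of_nonneg_left hpow (by positivity))
      (by positivity) (Real.exp_pos _).le
  rw [← Real.exp_add, ← Real.exp_add, Real.one_le_exp_iff] at fin1
  linarith

theorem fail_bound {n : ℕ} (hn : 0 < n) {p : ℝ} (h0 : 0 ≤ p) (h1 : p ≤ 1) {ε : ℝ} (hε : 0 < ε) :
    1 - (∑ A : Fin n → Fin n → Bool, MW p A * fmin A) / (ε * n) ≤
      ∑ A : Fin n → Fin n → Bool, MW p A * ind (fmin A ≤ ε * n) := by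
  have hn' : (0 : ℝ) < n := by exact_mod_cast hn
  rw [← MW_sum (n := n) (p := p), Finset.sum_div, ← Finset.sum_sub_distrib]
  refine Finset.sum_le_sum fun A _ => ?_
  have hw := MW_nonneg h0 h1 A
  have hf := fmin_nonneg A
  have hε' : 0 < ε * n := by positivity
  unfold ind
  split_ifs with h
  · have : 0 ≤ MW p A * fmin A / (ε * n) := by positivity
    linarith
  · push Not at h
    have : 1 ≤ fmin A / (ε * n) := by rw [le_div_iff₀ hε']; linarith
    have h2 := mul_le_mul_of_nonneg_left this hw
    rw [mul_div_assoc]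
    linarith

theorem measure_eq {n : ℕ} {p : ℝ} (h0 : 0 ≤ p) (h1 : p ≤ 1)
    (Q : (Fin n → Fin n → Bool) → Prop) :
    diMeasure n p {A | Q A} = ENNReal.ofReal (∑ A : Fin n → Fin n → Bool, MW p A * ind (Q A)) := by
  classical
  have hb : ∀ b : Bool, bernoulliM p {b} = ENNReal.ofReal (pw p b) := by
    intro b
    have e : bernoulliM p {b} = (↑(Real.toNNReal p) : ENNReal) * Measure.dirac true {b} +
        (↑(Real.toNNReal (1 - p)) : ENNReal) * Measure.dirac false {b} := rfl
    rw [e, Measure.dirac_apply' _ (measurableSet_singleton _),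
      Measure.dirac_apply' _ (measurableSet_singleton _)]
    unfold pw
    cases b <;> simp [Set.indicator, ENNReal.ofReal]
  have hs : ∀ A : Fin n → Fin n → Bool, diMeasure n p {A} = ENNReal.ofReal (MW p A) := by
    intro A
    unfold diMeasure MW W
    rw [Measure.pi_singleton, ENNReal.ofReal_prod_of_nonneg
      (fun v _ => Finset.prod_nonneg fun w _ => pw_nonneg h0 h1 _)]
    refine Finset.prod_congr rfl fun v _ => ?_
    rw [Measure.pi_singleton, ENNReal.ofReal_prod_of_nonneg (fun w _ => pw_nonneg h0 h1 _)]
    exact Finset.prod_congr rfl fun w _ => hb _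
  have hset : ({A | Q A} : Set (Fin n → Fin n → Bool)) = ↑(Finset.univ.filter Q) := by simp
  rw [hset, ← sum_measure_singleton, Finset.sum_congr rfl fun A _ => hs A,
    ← ENNReal.ofReal_sum_of_nonneg fun A _ => MW_nonneg h0 h1 A, Finset.sum_filter]
  congr 1
  refine Finset.sum_congr rfl fun A _ => ?_
  unfold ind
  by_cases h : Q A <;> simp [h]

end MajBis

/-- If `n·pₙ·(1−pₙ) → ∞` then, for every `ε > 0`, with high probability `𝔻(n,pₙ)` has a
bisection in which all but at most `ε·n` vertices are majority-coloured. -/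
theorem whp_almost_majority_bisection (p : ℕ → ℝ) (hp : ∀ n, p n ∈ Set.Icc (0 : ℝ) 1)
    (hgrow : Tendsto (fun n : ℕ => (n : ℝ) * p n * (1 - p n)) atTop atTop)
    (ε : ℝ) (hε : 0 < ε) :
    Tendsto (fun n => diMeasure n (p n)
        {A | ∃ c : Fin n → Bool, IsBisection c ∧
          ((({v | ¬ MajorityAt A c v} : Set (Fin n)).ncard : ℝ)) ≤ ε * n})
      atTop (nhds 1) := by
  classical
  rw [← ENNReal.ofReal_one]
  have hm := fun n => MajBis.measure_eq (n := n) (hp n).1 (hp n).2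
    (fun A => ∃ c : Fin n → Bool, IsBisection c ∧
          ((({v | ¬ MajorityAt A c v} : Set (Fin n)).ncard : ℝ)) ≤ ε * n)
  simp only [hm]
  refine ENNReal.tendsto_ofReal ?_
  rw [Metric.tendsto_nhds]
  intro κ hκ
  -- parameters
  obtain ⟨t, ht0, ht1, htκ⟩ : ∃ t : ℝ, 0 < t ∧ t ≤ 1 ∧ 3 * t ≤ κ / 2 * ε := by
    refine ⟨min 1 (κ / 6 * ε), by positivity, min_le_left _ _, ?_⟩
    have := min_le_right 1 (κ / 6 * ε)
    linarith
  set δ := t ^ 2 / 16 with hδdef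
  have hδ : 0 < δ := by positivity
  have hlog : ∀ᶠ n : ℕ in atTop, Real.log ((n : ℝ) + 1) ≤ t ^ 2 / 4 * (n + 1) := by
    have h1 := Real.isLittleO_log_id_atTop.bound (show 0 < t ^ 2 / 4 by positivity)
    have h2 : Tendsto (fun n : ℕ => (n : ℝ) + 1) atTop atTop :=
      tendsto_atTop_add_const_right _ _ tendsto_natCast_atTop_atTop
    filter_upwards [h2.eventually h1] with n hn
    have h3 : (0 : ℝ) ≤ n + 1 := by positivity
    simp only [id, Real.norm_eq_abs] at hn
    rw [abs_of_nonneg h3] at hn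
    exact (le_abs_self _).trans hn
  filter_upwards [hlog, hgrow.eventually_ge_atTop 2, hgrow.eventually_ge_atTop (8 / δ ^ 2),
    eventually_ge_atTop 1] with n hl hg1 hg2 hn
  obtain ⟨h0, h1⟩ := hp n
  have hnR : (1 : ℝ) ≤ n := by exact_mod_cast hn
  have hp0 : 0 < p n := by
    refine lt_of_le_of_ne h0 fun h => ?_
    rw [← h] at hg1
    norm_num at hg1
  have hp1 : p n < 1 := by
    refine lt_of_le_of_ne h1 fun h => ?_
    rw [h] at hg1
    norm_num at hg1
  have hmhalf : (n : ℝ) / 2 ≤ ((n - n / 2 : ℕ) : ℝ) := by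
    have : n ≤ 2 * (n - n / 2) := by omega
    have : (n : ℝ) ≤ 2 * ((n - n / 2 : ℕ) : ℝ) := by exact_mod_cast this
    linarith
  have hL : (n : ℝ) * p n * (1 - p n) / 2 ≤ ((n - n / 2 : ℕ) : ℝ) * p n * (1 - p n) := by
    have hq : 0 ≤ p n * (1 - p n) := mul_nonneg h0 (by linarith)
    have := mul_le_mul_of_nonneg_right hmhalf hq
    nlinarith
  have hbpm : ∀ k, MajBis.bpm (n - n / 2) (p n) k ≤ δ := by
    refine MajBis.bpm_le _ _ hp0 hp1 δ hδ (by linarith) ?_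
    have : 4 / δ ^ 2 ≤ ((n - n / 2 : ℕ) : ℝ) * p n * (1 - p n) := by
      have : 8 / δ ^ 2 = 2 * (4 / δ ^ 2) := by ring
      linarith
    rwa [div_le_iff₀' (by positivity)] at this
  have hmean := MajBis.mean_bound h0 h1 hδ.le hbpm t ht0 ht1
  have hfail := MajBis.fail_bound hn h0 h1 hε
  set Ef := ∑ A : Fin n → Fin n → Bool, MajBis.MW (p n) A * MajBis.fmin A
  have hEf : Ef ≤ 3 * t * n := by
    refine le_of_mul_le_mul_left ?_ ht0
    have : 16 * δ = t ^ 2 := by rw [hδdef]; ring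
    rw [this] at hmean
    have : t ^ 2 / 4 * ((n : ℝ) + 1) ≤ t ^ 2 / 2 * n := by nlinarith [sq_nonneg t]
    linarith
  have hratio : Ef / (ε * n) ≤ κ / 2 := by
    rw [div_le_iff₀ (by positivity)]
    have := mul_le_mul_of_nonneg_right htκ (show (0 : ℝ) ≤ n by positivity)
    linarith
  have hind : ∀ P : Prop, 0 ≤ MajBis.ind P ∧ MajBis.ind P ≤ 1 := by
    intro P; unfold MajBis.ind; split_ifs <;> simp
  have hlow : ∑ A : Fin n → Fin n → Bool, MajBis.MW (p n) A * MajBis.ind (MajBis.fmin A ≤ ε * n) ≤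
      ∑ A : Fin n → Fin n → Bool, MajBis.MW (p n) A * MajBis.ind (∃ c : Fin n → Bool,
        IsBisection c ∧ ((({v | ¬ MajorityAt A c v} : Set (Fin n)).ncard : ℝ)) ≤ ε * n) := by
    refine Finset.sum_le_sum fun A _ => mul_le_mul_of_nonneg_left ?_ (MajBis.MW_nonneg h0 h1 A)
    by_cases hA : MajBis.fmin A ≤ ε * n
    · have : ∃ c : Fin n → Bool,
        IsBisection c ∧ ((({v | ¬ MajorityAt A c v} : Set (Fin n)).ncard : ℝ)) ≤ ε * n := by
        obtain ⟨c, hc, he⟩ := Finset.exists_mem_eq_inf' (MajBis.Bs_nonempty n)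
          fun c => ((MajBis.badS A c).card : ℝ)
        refine ⟨c, MajBis.Bs_bis hc, ?_⟩
        have hset : ({v | ¬ MajorityAt A c v} : Set (Fin n)) = ↑(MajBis.badS A c) := by
          ext v; simp [MajBis.badS]; rfl
        rw [hset, Set.ncard_coe_finset, ← he]
        exact hA
      simp [MajBis.ind, hA, this]
    · have : MajBis.ind (MajBis.fmin A ≤ ε * n) = 0 := by simp [MajBis.ind, hA]
      rw [this]
      exact (hind _).1
  have hup : ∑ A : Fin n → Fin n → Bool, MajBis.MW (p n) A * MajBis.ind (∃ c : Fin n → Bool,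
        IsBisection c ∧ ((({v | ¬ MajorityAt A c v} : Set (Fin n)).ncard : ℝ)) ≤ ε * n) ≤ 1 := by
    rw [← MajBis.MW_sum (n := n) (p := p n)]
    exact Finset.sum_le_sum fun A _ => mul_le_of_le_one_right (MajBis.MW_nonneg h0 h1 A) (hind _).2
  rw [Real.dist_eq, abs_lt]
  constructor <;> linarith
end

section
/- Fix any constant C > 0 and let (p_n) be a sequence with p_n ≤ C/n. Then for every ε > 0, with high probability the binomial random digraph D ~ 𝔻(n, p_n) has a 3-colouring in which all but at most εn vertices are majority-coloured. -/
open MeasureTheory Filter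

namespace Maj
variable {n : ℕ}

/-- out-neighbourhood -/
def nbr (A : Fin n → Fin n → Bool) (v : Fin n) : Finset (Fin n) :=
  Finset.univ.filter (fun w => v ≠ w ∧ A v w = true)

def sgn (b : Bool) : Fin 3 := if b then 1 else 2

def col (s : Fin 3 × Bool) : Fin 3 := s.1 + sgn s.2

def cnt (A : Fin n → Fin n → Bool) (v : Fin n) (c : Fin n → Fin 3) (j : Fin 3) : ℕ :=
  ((nbr A v).filter (fun w => c w = j)).card

def maj (A : Fin n → Fin n → Bool) (v : Fin n) (c : Fin n → Fin 3) (j : Fin 3) : Prop :=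
  (nbr A v).card < 2 * cnt A v c j

theorem maj_unique {A : Fin n → Fin n → Bool} {v : Fin n} {c : Fin n → Fin 3} {i j : Fin 3}
    (hi : maj A v c i) (hj : maj A v c j) : i = j := by
  by_contra hij
  unfold maj cnt at *
  have h := Finset.card_union_of_disjoint (s := (nbr A v).filter (fun w => c w = i))
    (t := (nbr A v).filter (fun w => c w = j)) (by
      rw [Finset.disjoint_filter]; intro x _ h1 h2; exact hij (h1.symm.trans h2))
  have h2 : ((nbr A v).filter (fun w => c w = i) ∪ (nbr A v).filter (fun w => c w = j)).card
      ≤ (nbr A v).card := Finset.card_le_card (by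
        intro x; simp only [Finset.mem_union, Finset.mem_filter]; tauto)
  omega

open Classical in
noncomputable def newM (A : Fin n → Fin n → Bool) (v : Fin n) (c : Fin n → Fin 3) (m : Fin 3) :
    Fin 3 := if h : ∃ j, maj A v c j then h.choose else m

theorem newM_of_maj {A : Fin n → Fin n → Bool} {v : Fin n} {c : Fin n → Fin 3} {j : Fin 3}
    (m : Fin 3) (h : maj A v c j) : newM A v c m = j := by
  have h' : ∃ j, maj A v c j := ⟨j, h⟩
  unfold newM
  rw [dif_pos h']
  exact maj_unique h'.choose_spec h

theorem newM_of_not {A : Fin n → Fin n → Bool} {v : Fin n} {c : Fin n → Fin 3}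
    (m : Fin 3) (h : ¬ ∃ j, maj A v c j) : newM A v c m = m := by
  unfold newM
  rw [dif_neg h]

theorem newM_congr {A : Fin n → Fin n → Bool} {v : Fin n} {c c' : Fin n → Fin 3}
    (m : Fin 3) (h : ∀ w ∈ nbr A v, c w = c' w) : newM A v c m = newM A v c' m := by
  have : maj A v c = maj A v c' := by
    funext j
    unfold maj cnt
    congr 3
    exact Finset.filter_congr (fun w hw => by rw [h w hw])
  by_cases hc : ∃ j, maj A v c j
  · obtain ⟨j, hj⟩ := hc
    rw [newM_of_maj m hj, newM_of_maj m (this ▸ hj)]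
  · rw [newM_of_not m hc, newM_of_not m (this ▸ hc)]

theorem maj_rot (A : Fin n → Fin n → Bool) (v : Fin n) (c : Fin n → Fin 3) (a j : Fin 3) :
    maj A v (fun w => c w + a) (j + a) ↔ maj A v c j := by
  unfold maj cnt
  simp

theorem newM_rot (A : Fin n → Fin n → Bool) (v : Fin n) (c : Fin n → Fin 3) (m a : Fin 3) :
    newM A v (fun w => c w + a) (m + a) = newM A v c m + a := by
  by_cases h : ∃ j, maj A v c j
  · obtain ⟨j, hj⟩ := h
    rw [newM_of_maj m hj, newM_of_maj (j := j + a) _ ((maj_rot A v c a j).2 hj)]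
  · rw [newM_of_not m h, newM_of_not]
    rintro ⟨j, hj⟩
    refine h ⟨j - a, ?_⟩
    rw [← maj_rot A v c a, sub_add_cancel]
    exact hj

noncomputable def upd (A : Fin n → Fin n → Bool) (v : Fin n) (c : Fin n → Fin 3)
    (s : Fin 3 × Bool) : Fin 3 × Bool :=
  (newM A v c s.1, if newM A v c s.1 = s.1 then s.2 else !s.2)

noncomputable def st (A : Fin n → Fin n → Bool) : ℕ → (Fin n → Fin 3 × Bool) → Fin n → Fin 3 × Bool
  | 0, ω, v => ω v
  | t + 1, ω, v => upd A v (fun w => col (st A t ω w)) (st A t ω v)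

def reach (A : Fin n → Fin n → Bool) : ℕ → Fin n → Finset (Fin n)
  | 0, v => {v}
  | t + 1, v => {v} ∪ (nbr A v).biUnion (reach A t)

def good (A : Fin n → Fin n → Bool) : ℕ → Fin n → Prop
  | 0, _ => True
  | t + 1, v => (∀ w ∈ nbr A v, good A t w ∧ v ∉ reach A t w) ∧
      ∀ w ∈ nbr A v, ∀ w' ∈ nbr A v, w ≠ w' → Disjoint (reach A t w) (reach A t w')

theorem self_mem_reach (A : Fin n → Fin n → Bool) (t : ℕ) (v : Fin n) : v ∈ reach A t v := by
  cases t <;> simp [reach]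

theorem reach_mono_succ (A : Fin n → Fin n → Bool) (t : ℕ) : ∀ v, reach A t v ⊆ reach A (t+1) v := by
  induction t with
  | zero => intro v; simp [reach]
  | succ t ih =>
    intro v
    rw [reach, reach]
    apply Finset.union_subset_union_right
    exact Finset.biUnion_mono (fun w _ => ih w)

theorem reach_mono (A : Fin n → Fin n → Bool) {s t : ℕ} (h : s ≤ t) (v : Fin n) :
    reach A s v ⊆ reach A t v := by
  induction h with
  | refl => exact subset_rfl
  | step _ ih => exact ih.trans (reach_mono_succ A _ v)

theorem st_congr (A : Fin n → Fin n → Bool) (t : ℕ) : ∀ (v : Fin n) (ω ω' : Fin n → Fin 3 × Bool),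
    (∀ u ∈ reach A t v, ω u = ω' u) → st A t ω v = st A t ω' v := by
  induction t with
  | zero => intro v ω ω' h; exact h v (by simp [reach])
  | succ t ih =>
    intro v ω ω' h
    have h1 : st A t ω v = st A t ω' v := ih v ω ω' (fun u hu => h u (reach_mono_succ A t v hu))
    have h2 : ∀ w ∈ nbr A v, col (st A t ω w) = col (st A t ω' w) := by
      intro w hw
      rw [ih w ω ω']
      intro u hu
      apply h
      rw [reach]
      exact Finset.mem_union_right _ (Finset.mem_biUnion.2 ⟨w, hw, hu⟩)
    simp only [st, upd]
    rw [h1, newM_congr _ h2]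

theorem st_rot (A : Fin n → Fin n → Bool) (a : Fin 3) (ω : Fin n → Fin 3 × Bool) (t : ℕ) :
    ∀ (v : Fin n), st A t (fun u => ((ω u).1 + a, (ω u).2)) v =
      ((st A t ω v).1 + a, (st A t ω v).2) := by
  induction t with
  | zero => intro v; rfl
  | succ t ih =>
    intro v
    have : (fun w => col (st A t (fun u => ((ω u).1 + a, (ω u).2)) w)) =
        fun w => col (st A t ω w) + a := by
      funext w
      rw [ih w]
      simp only [col]
      abel
    simp only [st]
    rw [this, ih v]
    simp only [upd, newM_rot, add_left_inj]

def flip (v : Fin n) (ω : Fin n → Fin 3 × Bool) : Fin n → Fin 3 × Bool :=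
  fun u => if u = v then ((ω u).1, !(ω u).2) else ω u

theorem st_flip_other (A : Fin n → Fin n → Bool) (v w : Fin n) (ω : Fin n → Fin 3 × Bool) (t : ℕ)
    (h : v ∉ reach A t w) : st A t (flip v ω) w = st A t ω w := by
  apply st_congr
  intro u hu
  rw [flip, if_neg]
  rintro rfl; exact h hu

theorem st_flip (A : Fin n → Fin n → Bool) (v : Fin n) (ω : Fin n → Fin 3 × Bool) (t : ℕ)
    (h : ∀ w ∈ nbr A v, v ∉ reach A t w) : ∀ k ≤ t + 1, st A k (flip v ω) v =
      ((st A k ω v).1, !(st A k ω v).2) := by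
  intro k
  induction k with
  | zero => intro _; simp [st, flip]
  | succ k ih =>
    intro hk
    have h2 : ∀ w ∈ nbr A v, col (st A k (flip v ω) w) = col (st A k ω w) := by
      intro w hw
      rw [st_flip_other]
      intro hv
      exact h w hw (reach_mono A (by omega) w hv)
    simp only [st, upd]
    rw [ih (by omega), newM_congr _ h2]
    simp only [Prod.mk.injEq, true_and]
    split_ifs <;> rfl

/-- colour at time `t` -/
noncomputable def ct (A : Fin n → Fin n → Bool) (t : ℕ) (ω : Fin n → Fin 3 × Bool) (v : Fin n) : Fin 3 :=
  col (st A t ω v)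

theorem col_ne (s : Fin 3 × Bool) : col s ≠ s.1 := by
  revert s; decide

/-- a strict majority with own colour forces a change -/
theorem change_of_maj (A : Fin n → Fin n → Bool) (t : ℕ) (ω : Fin n → Fin 3 × Bool) (v : Fin n)
    (h : maj A v (ct A t ω) (ct A t ω v)) : ct A (t+1) ω v ≠ ct A t ω v := by
  have h1 : (st A (t+1) ω v).1 = ct A t ω v := by
    simp only [st, upd]
    exact newM_of_maj _ h
  rw [← h1]
  exact col_ne _

/-- at most one of the two flip states changes colour, and only if `M` changes -/
theorem change_flip (A : Fin n → Fin n → Bool) (t : ℕ) (ω : Fin n → Fin 3 × Bool) (v : Fin n)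
    (h : ∀ w ∈ nbr A v, v ∉ reach A t w)
    (h1 : ct A (t+1) ω v ≠ ct A t ω v) :
    (st A (t+1) ω v).1 ≠ (st A t ω v).1 ∧
    (st A (t+1) (flip v ω) v).1 ≠ (st A t (flip v ω) v).1 ∧
    ct A (t+1) (flip v ω) v = ct A t (flip v ω) v := by
  unfold ct at *
  rw [st_flip A v ω t h t (by omega), st_flip A v ω t h (t+1) (by omega)]
  simp only [st, upd] at h1 ⊢
  generalize newM A v (fun w => col (st A t ω w)) (st A t ω v).1 = m at *
  generalize st A t ω v = s at *
  revert m s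
  decide

theorem hybrid (N : Finset (Fin n)) (c c' : Fin n → Fin 3) (j : Fin 3) (h : ℕ)
    (h1 : (N.filter (fun w => c w = j)).card ≤ h) (h2 : h < (N.filter (fun w => c' w = j)).card) :
    ∃ w ∈ N, c w ≠ j ∧ c' w = j ∧
      ((N.erase w).filter (fun u => (if u < w then c' u else c u) = j)).card = h := by
  let g : ℕ → ℕ := fun k => (N.filter (fun u => (if u.val < k then c' u else c u) = j)).card
  have g0 : g 0 ≤ h := by simpa [g] using h1
  have gn : h < g n := by simpa [g] using h2
  have : ∃ k < n, g k ≤ h ∧ h < g (k+1) := by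
    by_contra hcon
    push Not at hcon
    have : ∀ k ≤ n, g k ≤ h := by
      intro k
      induction k with
      | zero => intro _; exact g0
      | succ k ih => intro hk; exact hcon k (by omega) (ih (by omega))
    have := this n le_rfl
    omega
  obtain ⟨k, hk, hk1, hk2⟩ := this
  let w : Fin n := ⟨k, hk⟩
  have e1 : (N.erase w).filter (fun u => (if u < w then c' u else c u) = j)
      = (N.filter (fun u => (if u.val < k then c' u else c u) = j)).erase w := by
    ext u
    simp only [Finset.mem_filter, Finset.mem_erase, Fin.lt_def, w]
    tauto
  have e2 : (N.erase w).filter (fun u => (if u < w then c' u else c u) = j)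
      = (N.filter (fun u => (if u.val < k+1 then c' u else c u) = j)).erase w := by
    ext u
    simp only [Finset.mem_filter, Finset.mem_erase, Fin.lt_def, w, ne_eq, Fin.ext_iff]
    constructor
    · rintro ⟨⟨a, b⟩, d⟩
      refine ⟨a, b, ?_⟩
      have hlt : u.val < k + 1 ↔ u.val < k := by omega
      simpa only [hlt] using d
    · rintro ⟨a, b, d⟩
      refine ⟨⟨a, b⟩, ?_⟩
      have hlt : u.val < k + 1 ↔ u.val < k := by omega
      simpa only [hlt] using d
  have m1 : w ∈ N.filter (fun u => (if u.val < k then c' u else c u) = j) ↔ w ∈ N ∧ c w = j := by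
    simp [w]
  have m2 : w ∈ N.filter (fun u => (if u.val < k+1 then c' u else c u) = j) ↔ w ∈ N ∧ c' w = j := by
    simp [w]
  simp only [g] at hk1 hk2
  have c1 := Finset.card_erase_eq_ite (s := N.filter (fun u => (if u.val < k then c' u else c u) = j)) (a := w)
  have c2 := Finset.card_erase_eq_ite (s := N.filter (fun u => (if u.val < k+1 then c' u else c u) = j)) (a := w)
  rw [← e1] at c1
  rw [← e2] at c2
  simp only [m1] at c1
  simp only [m2] at c2
  have b2 : w ∈ N ∧ c' w = j := by
    by_contra hc
    rw [if_neg hc] at c2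
    split_ifs at c1 <;> omega
  have b1 : ¬ (w ∈ N ∧ c w = j) := by
    intro hc
    rw [if_pos hc] at c1
    rw [if_pos b2] at c2
    have := Finset.card_pos.2 ⟨w, m1.2 hc⟩
    omega
  rw [if_pos b2] at c2
  rw [if_neg b1] at c1
  exact ⟨w, b2.1, fun hc => b1 ⟨b2.1, hc⟩, b2.2, by omega⟩

/-- numeric bound -/
theorem num_odd (h : ℕ) : (2 * h + 1 : ℝ) * (Nat.centralBinom h) * (2/9)^h ≤ 8/5 := by
  have key : ∀ k : ℕ, (2 * (k+3 : ℕ) + 1 : ℝ) * (Nat.centralBinom (k+3)) * (2/9)^(k+3) ≤ 8/5 := by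
    intro k
    induction k with
    | zero => norm_num [Nat.centralBinom, Nat.choose]
    | succ k ih =>
      refine le_trans ?_ ih
      have := Nat.succ_mul_centralBinom_succ (k+3)
      have h2 : ((k:ℝ)+4) * (Nat.centralBinom (k+4)) = 2 * (2 * (k+3)+1) * Nat.centralBinom (k+3) := by
        exact_mod_cast this
      have h3 : (Nat.centralBinom (k+4) : ℝ) = 2 * (2 * (k+3)+1) * Nat.centralBinom (k+3) / (k+4) := by
        rw [← h2]; field_simp
      rw [show k + 1 + 3 = k + 4 by ring, h3, show k + 4 = (k+3)+1 by ring, pow_succ]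
      push_cast
      have hP : (0:ℝ) ≤ (2 * ((k:ℝ)+3)+1) * Nat.centralBinom (k+3) * (2/9)^(k+3) := by positivity
      have : (2 * ((k:ℝ)+3+1)+1) * (2 * (2 * (k+3)+1) * Nat.centralBinom (k+3) / (k+4)) * ((2/9)^(k+3) * (2/9))
        = ((2 * ((k:ℝ)+3)+1) * Nat.centralBinom (k+3) * (2/9)^(k+3)) * ((4 * (2*(k:ℝ)+9)) / (9 * (k+4))) := by
        field_simp; ring
      rw [this]
      apply mul_le_of_le_one_right hP
      rw [div_le_one (by positivity)]
      have : (0:ℝ) ≤ k := by positivity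
      linarith
  match h with
  | 0 => norm_num [Nat.centralBinom, Nat.choose]
  | 1 => norm_num [Nat.centralBinom, Nat.choose]
  | 2 => norm_num [Nat.centralBinom, Nat.choose]
  | k+3 => exact key k

theorem num_bound (d : ℕ) (hd : 0 < d) :
    (d : ℝ) * (((d-1).choose (d/2) : ℕ) * ((1/3)^(d/2) * (2/3)^(d-1-d/2))) ≤ 8/5 := by
  obtain ⟨h, rfl | rfl⟩ := Nat.even_or_odd' d
  · obtain ⟨k, rfl⟩ : ∃ k, h = k+1 := ⟨h-1, by omega⟩
    have h1 : 2 * (k+1) / 2 = k+1 := by omega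
    have h2 : 2 * (k+1) - 1 = 2*k+1 := by omega
    have h3 : 2 * (k+1) - 1 - (k+1) = k := by omega
    rw [h1, h3, h2]
    have e : (Nat.centralBinom (k+1) : ℝ) = 2 * ((2*k+1).choose (k+1) : ℕ) := by
      rw [Nat.centralBinom, show 2 * (k+1) = (2*k+1)+1 by ring, Nat.choose_succ_succ,
        show (2*k+1).choose k = (2*k+1).choose (k+1) from (Nat.choose_symm_half k).symm]
      push_cast; ring
    refine le_trans ?_ (num_odd (k+1))
    rw [e]
    have : ((2:ℝ)/9)^(k+1) = (1/3)^(k+1) * (2/3)^k * (2/3) := by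
      rw [mul_assoc, ← pow_succ, ← mul_pow]; norm_num
    rw [this]
    push_cast
    have hP : (0:ℝ) ≤ ((2*k+1).choose (k+1) : ℕ) * ((1/3)^(k+1) * (2/3)^k) := by positivity
    have hk : (0:ℝ) ≤ k := by positivity
    nlinarith
  · have h1 : (2 * h + 1) / 2 = h := by omega
    have h2 : 2 * h + 1 - 1 = 2*h := by omega
    have h3 : 2 * h - h = h := by omega
    rw [h1, h2, h3, ← mul_pow]
    have := num_odd h
    rw [Nat.centralBinom] at this
    norm_num at this ⊢
    linarith
open ProbabilityTheory in
/-- uniform seed measure -/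
noncomputable def nu : Measure (Fin 3 × Bool) := (6 : ENNReal)⁻¹ • Measure.count

instance : IsProbabilityMeasure nu := ⟨by
  rw [nu, Measure.smul_apply, Measure.count_apply_finite _ Set.finite_univ]
  have : (Set.finite_univ (α := Fin 3 × Bool)).toFinset.card = 6 := by
    simp
  rw [this, smul_eq_mul]
  exact ENNReal.inv_mul_cancel (by norm_num) (by norm_num)⟩

theorem nu_pres (e : Fin 3 × Bool ≃ Fin 3 × Bool) : MeasurePreserving e nu nu := by
  refine ⟨measurable_of_finite _, ?_⟩
  ext s hs
  rw [Measure.map_apply (measurable_of_finite _) hs, nu, Measure.smul_apply, Measure.smul_apply,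
    Measure.count_apply (Set.toFinite _).measurableSet, Measure.count_apply hs,
    Set.encard_preimage_of_bijective e.bijective]

noncomputable def mu (n : ℕ) : Measure (Fin n → Fin 3 × Bool) := Measure.pi (fun _ => nu)

instance : IsProbabilityMeasure (mu n) := by unfold mu; infer_instance

theorem mset (E : Set (Fin n → Fin 3 × Bool)) : MeasurableSet E := (Set.toFinite E).measurableSet

theorem mu_pres (e : Fin n → (Fin 3 × Bool ≃ Fin 3 × Bool)) (E : Set (Fin n → Fin 3 × Bool)) :
    (mu n).real ((fun ω u => e u (ω u)) ⁻¹' E) = (mu n).real E := by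
  have := measurePreserving_pi (fun _ : Fin n => nu) (fun _ => nu) (fun u => nu_pres (e u))
  exact this.measureReal_preimage (mset E).nullMeasurableSet

def dep (E : Set (Fin n → Fin 3 × Bool)) (D : Finset (Fin n)) : Prop :=
  ∀ ω ω', (∀ u ∈ D, ω u = ω' u) → (ω ∈ E ↔ ω' ∈ E)

open Classical in
theorem indep_two (E F : Set (Fin n → Fin 3 × Bool)) (D D' : Finset (Fin n)) (hD : Disjoint D D')
    (hE : dep E D) (hF : dep F D') : (mu n).real (E ∩ F) = (mu n).real E * (mu n).real F := by
  have h0 : ProbabilityTheory.iIndepFun (fun (i : Fin n) (ω : Fin n → Fin 3 × Bool) => ω i) (mu n) :=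
    ProbabilityTheory.iIndepFun_pi (X := fun _ x => x) (fun i => aemeasurable_id)
  have h1 := h0.indepFun_finset D D' hD (fun i => measurable_pi_apply i)
  have ex : ∀ (G : Set (Fin n → Fin 3 × Bool)) (S : Finset (Fin n)), dep G S →
      ∃ G' : Set (S → Fin 3 × Bool), G = (fun (ω : Fin n → Fin 3 × Bool) (i : S) => ω i) ⁻¹' G' := by
    intro G S hG
    refine ⟨{y | (fun u => if h : u ∈ S then y ⟨u, h⟩ else (0, true)) ∈ G}, ?_⟩
    ext ω
    simp only [Set.mem_preimage, Set.mem_ofPred_eq]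
    apply hG
    intro u hu
    simp [hu]
  obtain ⟨E', hE'⟩ := ex E D hE
  obtain ⟨F', hF'⟩ := ex F D' hF
  have := h1.measure_inter_preimage_eq_mul E' F' (Set.toFinite _).measurableSet (Set.toFinite _).measurableSet
  rw [hE', hF']
  simp only [measureReal_def]
  rw [this, ENNReal.toReal_mul]

theorem indep_many (N : Finset (Fin n)) (E : Fin n → Set (Fin n → Fin 3 × Bool))
    (D : Fin n → Finset (Fin n))
    (hD : ∀ w ∈ N, ∀ w' ∈ N, w ≠ w' → Disjoint (D w) (D w'))
    (hE : ∀ w ∈ N, dep (E w) (D w)) :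
    (mu n).real {ω | ∀ w ∈ N, ω ∈ E w} = ∏ w ∈ N, (mu n).real (E w) := by
  induction N using Finset.induction_on with
  | empty => simp
  | insert a s ha ih =>
    rw [Finset.prod_insert ha, ← ih (fun w hw w' hw' => hD w (Finset.mem_insert_of_mem hw) w'
      (Finset.mem_insert_of_mem hw')) (fun w hw => hE w (Finset.mem_insert_of_mem hw))]
    rw [← indep_two _ _ (D a) (s.biUnion D)]
    · congr 1
      ext ω
      simp
    · rw [Finset.disjoint_biUnion_right]
      intro i hi
      apply hD a (Finset.mem_insert_self _ _) i (Finset.mem_insert_of_mem hi)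
      rintro rfl; exact ha hi
    · exact hE a (Finset.mem_insert_self _ _)
    · intro ω ω' h
      simp only [Set.mem_ofPred_eq]
      refine forall₂_congr (fun w hw => ?_)
      apply hE w (Finset.mem_insert_of_mem hw)
      intro u hu
      exact h u (Finset.mem_biUnion.2 ⟨w, hw, hu⟩)

theorem ct_rot (A : Fin n → Fin n → Bool) (a : Fin 3) (ω : Fin n → Fin 3 × Bool) (t : ℕ) (v : Fin n) :
    ct A t (fun u => ((ω u).1 + a, (ω u).2)) v = ct A t ω v + a := by
  unfold ct
  rw [st_rot]
  simp only [col]; abel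

theorem unif (A : Fin n → Fin n → Bool) (t : ℕ) (v : Fin n) (j : Fin 3) :
    (mu n).real {ω | ct A t ω v = j} = 1/3 := by
  have key : ∀ j, (mu n).real {ω | ct A t ω v = j} = (mu n).real {ω | ct A t ω v = 0} := by
    intro j
    have := mu_pres (fun _ : Fin n => (Equiv.addRight j).prodCongr (Equiv.refl Bool)) {ω | ct A t ω v = j}
    rw [← this]
    congr 1
    ext ω
    have h2 := ct_rot A j ω t v
    simp only [Set.mem_preimage, Set.mem_ofPred_eq, Equiv.prodCongr_apply, Prod.map, Equiv.coe_addRight,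
      Equiv.refl_apply, h2]
    simp
  have hsum : ∑ j : Fin 3, (mu n).real {ω | ct A t ω v = j} = 1 := by
    have := sum_measureReal_preimage_singleton (μ := mu n) (f := fun ω => ct A t ω v) Finset.univ
      (fun y _ => mset _)
    simp only [Finset.coe_univ, Set.preimage_univ, probReal_univ] at this
    rw [← this]
    rfl
  rw [Fin.sum_univ_three, key 1, key 2] at hsum
  rw [key j]
  linarith

theorem unif_not (A : Fin n → Fin n → Bool) (t : ℕ) (v : Fin n) (j : Fin 3) :
    (mu n).real {ω | ct A t ω v ≠ j} = 2/3 := by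
  have := probReal_compl_eq_one_sub (μ := mu n) (mset {ω | ct A t ω v = j})
  rw [unif] at this
  rw [show {ω | ct A t ω v ≠ j} = {ω | ct A t ω v = j}ᶜ from rfl, this]
  norm_num

theorem half (A : Fin n → Fin n → Bool) (t : ℕ) (v : Fin n)
    (h : ∀ w ∈ nbr A v, v ∉ reach A t w) :
    (mu n).real {ω | ct A (t+1) ω v ≠ ct A t ω v} ≤
      (1/2) * (mu n).real {ω | (st A (t+1) ω v).1 ≠ (st A t ω v).1} := by
  have h1 := mu_pres (fun u : Fin n => if u = v then (Equiv.refl (Fin 3)).prodCongr Equiv.boolNot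
    else Equiv.refl _) {ω | ct A (t+1) ω v ≠ ct A t ω v}
  have h2 : (fun (ω : Fin n → Fin 3 × Bool) u => (if u = v then (Equiv.refl (Fin 3)).prodCongr Equiv.boolNot
    else Equiv.refl _) (ω u)) = flip v := by
    funext ω u
    unfold flip
    split_ifs <;> rfl
  rw [h2] at h1
  have hff : ∀ ω, flip v (flip v ω) = ω := by
    intro ω; funext u
    unfold flip
    split_ifs <;> simp
  have hdis : Disjoint {ω | ct A (t+1) ω v ≠ ct A t ω v} (flip v ⁻¹' {ω | ct A (t+1) ω v ≠ ct A t ω v}) := by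
    rw [Set.disjoint_left]
    intro ω hω hω'
    exact hω' (change_flip A t ω v h hω).2.2
  have hsub : {ω | ct A (t+1) ω v ≠ ct A t ω v} ∪ (flip v ⁻¹' {ω | ct A (t+1) ω v ≠ ct A t ω v}) ⊆
      {ω | (st A (t+1) ω v).1 ≠ (st A t ω v).1} := by
    rintro ω (hω | hω)
    · exact (change_flip A t ω v h hω).1
    · have := (change_flip A t _ v h hω).2.1
      rw [hff] at this
      exact this
  have h3 := measureReal_mono (μ := mu n) hsub
  rw [measureReal_union hdis (mset _), h1] at h3
  linarith

/-- the probability that at `w` a crossing towards `j` takes place -/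
theorem cross (A : Fin n → Fin n → Bool) (t : ℕ) (v w : Fin n) (hw : w ∈ nbr A v) (j : Fin 3) (h : ℕ)
    (hD : ∀ w ∈ nbr A v, ∀ w' ∈ nbr A v, w ≠ w' → Disjoint (reach A (t+1) w) (reach A (t+1) w')) :
    (mu n).real {ω | ct A t ω w ≠ j ∧ ct A (t+1) ω w = j ∧
      (((nbr A v).erase w).filter (fun u => (if u < w then ct A (t+1) ω u else ct A t ω u) = j)).card = h}
    ≤ (((nbr A v).card - 1).choose h : ℕ) * ((1/3)^h * (2/3)^((nbr A v).card - 1 - h)) *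
      (mu n).real {ω | ct A t ω w ≠ j ∧ ct A (t+1) ω w = j} := by
  set N := (nbr A v).erase w with hN
  let hy : (Fin n → Fin 3 × Bool) → Fin n → Fin 3 := fun ω u => if u < w then ct A (t+1) ω u else ct A t ω u
  let F : Finset (Fin n) → Fin n → Set (Fin n → Fin 3 × Bool) := fun S u =>
    if u = w then {ω | ct A t ω w ≠ j ∧ ct A (t+1) ω w = j} else
      if u ∈ S then {ω | hy ω u = j} else {ω | hy ω u ≠ j}
  have hsub : {ω | ct A t ω w ≠ j ∧ ct A (t+1) ω w = j ∧ (N.filter (fun u => hy ω u = j)).card = h}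
      ⊆ ⋃ S ∈ N.powersetCard h, {ω | ∀ u ∈ nbr A v, ω ∈ F S u} := by
    rintro ω ⟨h1, h2, h3⟩
    simp only [Set.mem_iUnion]
    refine ⟨N.filter (fun u => hy ω u = j), Finset.mem_powersetCard.2 ⟨Finset.filter_subset _ _, h3⟩, ?_⟩
    intro u hu
    simp only [F]
    by_cases huw : u = w
    · rw [if_pos huw]; exact ⟨h1, h2⟩
    · rw [if_neg huw]
      have : u ∈ N := Finset.mem_erase.2 ⟨huw, hu⟩
      by_cases hj : hy ω u = j
      · rw [if_pos (Finset.mem_filter.2 ⟨this, hj⟩)]; exact hj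
      · rw [if_neg (by simp [hj])]; exact hj
  have hcong : ∀ u ω ω', (∀ x ∈ reach A (t+1) u, ω x = ω' x) →
      ct A t ω u = ct A t ω' u ∧ ct A (t+1) ω u = ct A (t+1) ω' u := by
    intro u ω ω' hx
    unfold ct
    rw [st_congr A (t+1) u ω ω' hx, st_congr A t u ω ω' (fun x hx' => hx x (reach_mono_succ A t u hx'))]
    exact ⟨rfl, rfl⟩
  have hdep : ∀ S u, dep (F S u) (reach A (t+1) u) := by
    intro S u ω ω' hx
    obtain ⟨e1, e2⟩ := hcong u ω ω' hx
    simp only [F]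
    split_ifs with q1 q2
    · subst q1
      simp only [Set.mem_ofPred_eq, e1, e2]
    · simp only [Set.mem_ofPred_eq, hy, e1, e2]
    · simp only [Set.mem_ofPred_eq, hy, e1, e2]
  have hNc : N.card = (nbr A v).card - 1 := Finset.card_erase_of_mem hw
  have hval : ∀ S ∈ N.powersetCard h, (mu n).real {ω | ∀ u ∈ nbr A v, ω ∈ F S u} =
      ((1/3)^h * (2/3)^((nbr A v).card - 1 - h)) * (mu n).real {ω | ct A t ω w ≠ j ∧ ct A (t+1) ω w = j} := by
    intro S hS
    obtain ⟨hS1, hS2⟩ := Finset.mem_powersetCard.1 hS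
    rw [indep_many (nbr A v) (F S) (reach A (t+1)) hD (fun u _ => hdep S u),
      ← Finset.mul_prod_erase _ _ hw, mul_comm]
    congr 1
    · have : ∀ u ∈ N, (mu n).real (F S u) = if u ∈ S then 1/3 else 2/3 := by
        intro u hu
        simp only [F]
        rw [if_neg (Finset.mem_erase.1 hu).1]
        by_cases hlt : u < w <;> by_cases huS : u ∈ S <;>
          simp only [hy, hlt, huS, if_true, if_false, unif, unif_not]
      rw [← hN, Finset.prod_congr rfl this, Finset.prod_ite, Finset.prod_const, Finset.prod_const]
      have e1 : N.filter (fun u => u ∈ S) = S := by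
        ext u; simp only [Finset.mem_filter]; exact ⟨fun q => q.2, fun q => ⟨hS1 q, q⟩⟩
      have e2 : N.filter (fun u => u ∉ S) = N \ S := by
        ext u; simp
      rw [e1, e2, Finset.card_sdiff_of_subset hS1, hS2, hNc]
    · simp only [F, if_true]
  calc _ ≤ (mu n).real (⋃ S ∈ N.powersetCard h, {ω | ∀ u ∈ nbr A v, ω ∈ F S u}) := measureReal_mono hsub (measure_ne_top _ _)
    _ ≤ ∑ S ∈ N.powersetCard h, (mu n).real {ω | ∀ u ∈ nbr A v, ω ∈ F S u} :=
        measureReal_biUnion_finset_le _ _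
    _ = _ := by
      rw [Finset.sum_congr rfl hval, Finset.sum_const, Finset.card_powersetCard, hNc, nsmul_eq_mul]; ring

theorem sum_dir (A : Fin n → Fin n → Bool) (t : ℕ) (w : Fin n) :
    ∑ j : Fin 3, (mu n).real {ω | ct A t ω w ≠ j ∧ ct A (t+1) ω w = j} =
      (mu n).real {ω | ct A (t+1) ω w ≠ ct A t ω w} := by
  rw [← measureReal_biUnion_finset]
  · congr 1
    ext ω
    simp only [Finset.mem_univ, Set.iUnion_true, Set.mem_iUnion, Set.mem_ofPred_eq]
    constructor
    · rintro ⟨j, h1, h2⟩ h3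
      exact h1 (h3.symm.trans h2)
    · intro h
      exact ⟨_, fun hc => h hc.symm, rfl⟩
  · intro i _ j _ hij
    rw [Function.onFun, Set.disjoint_left]
    rintro ω h1 h2
    exact hij (h1.2.symm.trans h2.2)
  · intro _ _; exact mset _

theorem step (A : Fin n → Fin n → Bool) (t : ℕ) (v : Fin n) (x : ℝ)
    (hx : ∀ w ∈ nbr A v, (mu n).real {ω | ct A (t+1) ω w ≠ ct A t ω w} ≤ x) (hx0 : 0 ≤ x)
    (hD : ∀ w ∈ nbr A v, ∀ w' ∈ nbr A v, w ≠ w' → Disjoint (reach A (t+1) w) (reach A (t+1) w')) :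
    (mu n).real {ω | (st A (t+2) ω v).1 ≠ (st A (t+1) ω v).1} ≤ 8/5 * x := by
  set d := (nbr A v).card with hd
  have hsub : {ω | (st A (t+2) ω v).1 ≠ (st A (t+1) ω v).1} ⊆
      ⋃ w ∈ nbr A v, ⋃ j ∈ (Finset.univ : Finset (Fin 3)), {ω | ct A t ω w ≠ j ∧ ct A (t+1) ω w = j ∧
      (((nbr A v).erase w).filter (fun u => (if u < w then ct A (t+1) ω u else ct A t ω u) = j)).card = d/2} := by
    intro ω hω
    have h1 : ∃ j, maj A v (ct A (t+1) ω) j := by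
      by_contra hc
      exact hω (newM_of_not _ hc)
    obtain ⟨j, hj⟩ := h1
    have h2 : (st A (t+2) ω v).1 = j := newM_of_maj _ hj
    have h3 : ¬ maj A v (ct A t ω) j := by
      intro hc
      have : (st A (t+1) ω v).1 = j := newM_of_maj _ hc
      exact hω (h2.trans this.symm)
    unfold maj cnt at hj h3
    obtain ⟨w, hw, q1, q2, q3⟩ := hybrid (nbr A v) (ct A t ω) (ct A (t+1) ω) j (d/2) (by omega) (by omega)
    simp only [Set.mem_iUnion]
    exact ⟨w, hw, j, Finset.mem_univ _, q1, q2, q3⟩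
  rcases Nat.eq_zero_or_pos d with h0 | hpos
  · rw [Finset.card_eq_zero.1 (hd.symm.trans h0)] at hsub
    have : {ω | (st A (t+2) ω v).1 ≠ (st A (t+1) ω v).1} = ∅ := by
      simpa using hsub
    rw [this]; simp; exact hx0
  set b : ℝ := ((d-1).choose (d/2) : ℕ) * ((1/3)^(d/2) * (2/3)^(d-1-d/2)) with hb
  have hb0 : 0 ≤ b := by positivity
  calc _ ≤ _ := measureReal_mono hsub (measure_ne_top _ _)
    _ ≤ _ := measureReal_biUnion_finset_le _ _
    _ ≤ ∑ w ∈ nbr A v, b * x := by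
      apply Finset.sum_le_sum
      intro w hw
      refine (measureReal_biUnion_finset_le _ _).trans ?_
      refine (Finset.sum_le_sum (fun j _ => cross A t v w hw j (d/2) hD)).trans ?_
      rw [← Finset.mul_sum, sum_dir]
      exact mul_le_mul_of_nonneg_left (hx w hw) hb0
    _ = (d * b) * x := by rw [Finset.sum_const, nsmul_eq_mul]; ring
    _ ≤ 8/5 * x := mul_le_mul_of_nonneg_right (num_bound d hpos) hx0

theorem decay (A : Fin n → Fin n → Bool) (t : ℕ) : ∀ v, good A (t+1) v →
    (mu n).real {ω | ct A (t+1) ω v ≠ ct A t ω v} ≤ (4/5 : ℝ)^t := by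
  induction t with
  | zero => intro v _; simp
  | succ t ih =>
    intro v hg
    rw [good] at hg
    refine (half A (t+1) v (fun w hw => (hg.1 w hw).2)).trans ?_
    have := step A t v ((4/5)^t) (fun w hw => ih w (hg.1 w hw).1) (by positivity) hg.2
    rw [pow_succ]
    linarith

open Classical in
theorem exists_col (A : Fin n → Fin n → Bool) (t : ℕ) : ∃ c : Fin n → Fin 3,
    ((Finset.univ.filter (fun v => maj A v c (c v))).card : ℝ) ≤
      (Finset.univ.filter (fun v => ¬ good A (t+1) v)).card + n * (4/5)^t := by
  let G := Finset.univ.filter (fun v => good A (t+1) v)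
  let X : (Fin n → Fin 3 × Bool) → ℝ := fun ω =>
    ∑ v ∈ G, Set.indicator {ω | ct A (t+1) ω v ≠ ct A t ω v} (fun _ => (1:ℝ)) ω
  have hIntg : ∀ f : (Fin n → Fin 3 × Bool) → ℝ, Integrable f (mu n) := fun f => Integrable.of_finite
  have hE : ∫ ω, X ω ∂(mu n) ≤ n * (4/5)^t := by
    rw [integral_finsetSum _ (fun _ _ => hIntg _)]
    calc _ ≤ ∑ v ∈ G, ((4:ℝ)/5)^t := by
          apply Finset.sum_le_sum
          intro v hv
          rw [integral_indicator (mset _)]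
          simp only [integral_const, smul_eq_mul, mul_one]
          simpa using decay A t v (Finset.mem_filter.1 hv).2
      _ = G.card * (4/5)^t := by rw [Finset.sum_const, nsmul_eq_mul]
      _ ≤ n * (4/5)^t := by
          gcongr
          simpa using Finset.card_le_univ G
  obtain ⟨ω, hω⟩ := exists_le_integral (hIntg X)
  refine ⟨ct A t ω, ?_⟩
  have h1 : (Finset.univ.filter (fun v => maj A v (ct A t ω) (ct A t ω v))) ⊆
      (Finset.univ.filter (fun v => ¬ good A (t+1) v)) ∪
        G.filter (fun v => ct A (t+1) ω v ≠ ct A t ω v) := by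
    intro v hv
    have := change_of_maj A t ω v (Finset.mem_filter.1 hv).2
    simp only [G, Finset.mem_union, Finset.mem_filter, Finset.mem_univ, true_and]
    tauto
  have h2 := (Finset.card_le_card h1).trans (Finset.card_union_le _ _)
  have h3 : ((G.filter (fun v => ct A (t+1) ω v ≠ ct A t ω v)).card : ℝ) = X ω := by
    simp only [X, Set.indicator_apply, Set.mem_ofPred_eq]
    rw [Finset.sum_boole]
  have h4 : ((Finset.univ.filter (fun v => maj A v (ct A t ω) (ct A t ω v))).card : ℝ) ≤
      (Finset.univ.filter (fun v => ¬ good A (t+1) v)).card +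
      (G.filter (fun v => ct A (t+1) ω v ≠ ct A t ω v)).card := by exact_mod_cast h2
  rw [h3] at h4
  linarith

/-- the set `S` spans at least `|S|` arcs -/
def dense (A : Fin n → Fin n → Bool) (S : Finset (Fin n)) : Prop :=
  S.card ≤ ∑ u ∈ S, (nbr A u ∩ S).card

theorem reach_path (A : Fin n → Fin n → Bool) (t : ℕ) : ∀ w z, z ∈ reach A t w →
    ∃ P : Finset (Fin n), w ∈ P ∧ z ∈ P ∧ P.card ≤ t + 1 ∧
      ∀ u ∈ P, u ≠ z → ∃ u' ∈ P, u' ∈ nbr A u := by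
  induction t with
  | zero =>
    intro w z hz
    have : z = w := by simpa [reach] using hz
    subst this
    exact ⟨{z}, by simp⟩
  | succ t ih =>
    intro w z hz
    rw [reach, Finset.mem_union, Finset.mem_singleton, Finset.mem_biUnion] at hz
    rcases hz with rfl | ⟨x, hx, hz⟩
    · exact ⟨{z}, by simp⟩
    · obtain ⟨P, h1, h2, h3, h4⟩ := ih x z hz
      refine ⟨insert w P, by simp, by simp [h2], (Finset.card_insert_le _ _).trans (by omega), ?_⟩
      intro u hu huz
      rcases Finset.mem_insert.1 hu with rfl | hu
      · exact ⟨x, by simp [h1], hx⟩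
      · obtain ⟨u', q1, q2⟩ := h4 u hu huz
        exact ⟨u', by simp [q1], q2⟩

theorem dense_of_all (A : Fin n → Fin n → Bool) (S : Finset (Fin n))
    (h : ∀ u ∈ S, ∃ u' ∈ S, u' ∈ nbr A u) : dense A S := by
  unfold dense
  rw [Finset.card_eq_sum_ones]
  apply Finset.sum_le_sum
  intro u hu
  obtain ⟨u', h1, h2⟩ := h u hu
  exact Finset.card_pos.2 ⟨u', Finset.mem_inter.2 ⟨h2, h1⟩⟩

theorem exists_dense (A : Fin n → Fin n → Bool) (t : ℕ) : ∀ v, ¬ good A t v →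
    ∃ S : Finset (Fin n), v ∈ S ∧ S.card ≤ 2 * t + 1 ∧ dense A S := by
  induction t with
  | zero => intro v h; exact absurd trivial h
  | succ t ih =>
    intro v h
    by_cases h1 : ∃ w ∈ nbr A v, ¬ good A t w
    · obtain ⟨w, hw, hg⟩ := h1
      obtain ⟨S, q1, q2, q3⟩ := ih w hg
      by_cases hv : v ∈ S
      · exact ⟨S, hv, by omega, q3⟩
      · refine ⟨insert v S, by simp, (Finset.card_insert_le _ _).trans (by omega), ?_⟩
        unfold dense at *
        rw [Finset.sum_insert hv, Finset.card_insert_of_notMem hv]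
        have e1 : 1 ≤ (nbr A v ∩ insert v S).card :=
          Finset.card_pos.2 ⟨w, by simp [hw, q1]⟩
        have e2 : ∑ u ∈ S, (nbr A u ∩ S).card ≤ ∑ u ∈ S, (nbr A u ∩ insert v S).card := by
          apply Finset.sum_le_sum
          intro u _
          exact Finset.card_le_card (Finset.inter_subset_inter_left (Finset.subset_insert _ _))
        omega
    push Not at h1
    by_cases h2 : ∃ w ∈ nbr A v, v ∈ reach A t w
    · obtain ⟨w, hw, hr⟩ := h2
      obtain ⟨P, q1, q2, q3, q4⟩ := reach_path A t w v hr
      refine ⟨P, q2, by omega, dense_of_all A P ?_⟩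
      intro u hu
      by_cases huv : u = v
      · subst huv; exact ⟨w, q1, hw⟩
      · exact q4 u hu huv
    push Not at h2
    have h3 : ∃ w ∈ nbr A v, ∃ w' ∈ nbr A v, w ≠ w' ∧ ¬ Disjoint (reach A t w) (reach A t w') := by
      by_contra hc
      push Not at hc
      exact h ⟨fun w hw => ⟨h1 w hw, h2 w hw⟩, hc⟩
    obtain ⟨w, hw, w', hw', hne, hdis⟩ := h3
    obtain ⟨z, hz, hz'⟩ := Finset.not_disjoint_iff.1 hdis
    have hvz : z ≠ v := by rintro rfl; exact h2 w hw hz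
    obtain ⟨P, q1, q2, q3, q4⟩ := reach_path A t w z hz
    obtain ⟨P', r1, r2, r3, r4⟩ := reach_path A t w' z hz'
    refine ⟨insert v (P ∪ P'), by simp, ?_, ?_⟩
    · have a1 := Finset.card_insert_le v (P ∪ P')
      have a2 := Finset.card_union_le P P'
      omega
    · set S := insert v (P ∪ P') with hS
      have hvS : v ∈ S := by simp [hS]
      have hzS : z ∈ S.erase v := by simp [hS, hvz, q2]
      have hv2 : 2 ≤ (nbr A v ∩ S).card := by
        have : ({w, w'} : Finset (Fin n)) ⊆ nbr A v ∩ S := by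
          intro x hx
          rcases Finset.mem_insert.1 hx with rfl | hx
          · simp [hS, hw, q1]
          · rw [Finset.mem_singleton.1 hx]; simp [hS, hw', r1]
        have := Finset.card_le_card this
        rwa [Finset.card_pair hne] at this
      have hrest : ((S.erase v).erase z).card ≤ ∑ u ∈ (S.erase v).erase z, (nbr A u ∩ S).card := by
        rw [Finset.card_eq_sum_ones]
        apply Finset.sum_le_sum
        intro u hu
        simp only [hS, Finset.mem_erase, Finset.mem_insert, Finset.mem_union] at hu
        obtain ⟨hu1, hu2, hu3 | hu3 | hu3⟩ := hu
        · exact absurd hu3 hu2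
        · obtain ⟨x, x1, x2⟩ := q4 u hu3 hu1
          exact Finset.card_pos.2 ⟨x, by simp [hS, x1, x2]⟩
        · obtain ⟨x, x1, x2⟩ := r4 u hu3 hu1
          exact Finset.card_pos.2 ⟨x, by simp [hS, x1, x2]⟩
      unfold dense
      rw [← Finset.add_sum_erase _ _ hvS, ← Finset.add_sum_erase _ _ hzS]
      have c1 := Finset.card_erase_add_one hvS
      have c2 := Finset.card_erase_add_one hzS
      omega

theorem bern_univ {p : ℝ} (hp : p ∈ Set.Icc (0:ℝ) 1) : bernoulliM p Set.univ = 1 := by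
  unfold bernoulliM
  simp only [Measure.add_apply, Measure.smul_apply, measure_univ]
  rw [← add_smul, ← Real.toNNReal_add hp.1 (by linarith [hp.2])]
  simp

theorem bern_true (p : ℝ) : bernoulliM p {true} = ENNReal.ofReal p := by
  unfold bernoulliM
  rw [Measure.add_apply, Measure.smul_apply, Measure.smul_apply, Measure.dirac_apply, Measure.dirac_apply,
    ENNReal.smul_def, ENNReal.smul_def]
  simp only [Set.indicator_apply, Set.mem_singleton_iff, Pi.one_apply, smul_eq_mul, if_true,
    Bool.false_eq_true, if_false, mul_one, mul_zero, add_zero]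
  rfl

theorem di_prob (n : ℕ) {p : ℝ} (hp : p ∈ Set.Icc (0:ℝ) 1) : IsProbabilityMeasure (diMeasure n p) := by
  have : IsProbabilityMeasure (bernoulliM p) := ⟨bern_univ hp⟩
  unfold diMeasure
  infer_instance

theorem di_arcs (n : ℕ) {p : ℝ} (hp : p ∈ Set.Icc (0:ℝ) 1) (E : Finset (Fin n × Fin n)) :
    (diMeasure n p).real {A | ∀ e ∈ E, A e.1 e.2 = true} = p ^ E.card := by
  have : IsProbabilityMeasure (bernoulliM p) := ⟨bern_univ hp⟩
  have h1 : {A : Fin n → Fin n → Bool | ∀ e ∈ E, A e.1 e.2 = true} =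
      Set.pi Set.univ (fun v => Set.pi Set.univ (fun w => if (v, w) ∈ E then {true} else Set.univ)) := by
    ext A
    simp only [Set.mem_ofPred_eq, Set.mem_pi, Set.mem_univ, true_implies, Prod.forall]
    refine forall_congr' (fun v => forall_congr' (fun w => ?_))
    split_ifs with h <;> simp [h]
  have h2 : diMeasure n p {A | ∀ e ∈ E, A e.1 e.2 = true} = ENNReal.ofReal p ^ E.card := by
    rw [h1, diMeasure, Measure.pi_pi]
    simp only [Measure.pi_pi]
    rw [← Fintype.prod_prod_type' (f := fun v w => bernoulliM p (if (v, w) ∈ E then {true} else Set.univ))]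
    have : ∀ x : Fin n × Fin n, bernoulliM p (if (x.1, x.2) ∈ E then {true} else Set.univ) =
        if x ∈ E then ENNReal.ofReal p else 1 := by
      intro x
      split_ifs
      · exact bern_true p
      · exact bern_univ hp
    simp only [this]
    rw [Finset.prod_ite_mem]
    simp
  rw [measureReal_def, h2, ENNReal.toReal_pow, ENNReal.toReal_ofReal hp.1]

theorem di_dense (n : ℕ) {p : ℝ} (hp : p ∈ Set.Icc (0:ℝ) 1) (S : Finset (Fin n)) :
    (diMeasure n p).real {A | dense A S} ≤ ((S.card * S.card).choose S.card : ℕ) * p ^ S.card := by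
  have := di_prob n hp
  have hsub : {A | dense A S} ⊆ ⋃ E ∈ (S ×ˢ S).powersetCard S.card,
      {A : Fin n → Fin n → Bool | ∀ e ∈ E, A e.1 e.2 = true} := by
    intro A hA
    have h1 : S.card ≤ ((S ×ˢ S).filter (fun e => e.2 ∈ nbr A e.1)).card := by
      refine le_trans hA ?_
      rw [Finset.card_filter, Finset.sum_product]
      apply Finset.sum_le_sum
      intro u _
      rw [← Finset.card_filter]
      apply Finset.card_le_card
      intro x hx
      rw [Finset.mem_inter] at hx
      exact Finset.mem_filter.2 ⟨hx.2, hx.1⟩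
    obtain ⟨E, hE1, hE2⟩ := Finset.exists_subset_card_eq h1
    simp only [Set.mem_iUnion]
    refine ⟨E, Finset.mem_powersetCard.2 ⟨hE1.trans (Finset.filter_subset _ _), hE2⟩, ?_⟩
    intro e he
    have := (Finset.mem_filter.1 (hE1 he)).2
    exact (Finset.mem_filter.1 this).2.2
  calc _ ≤ _ := measureReal_mono hsub (measure_ne_top _ _)
    _ ≤ _ := measureReal_biUnion_finset_le _ _
    _ = ∑ E ∈ (S ×ˢ S).powersetCard S.card, p ^ S.card := by
      apply Finset.sum_congr rfl
      intro E hE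
      rw [di_arcs n hp, (Finset.mem_powersetCard.1 hE).2]
    _ = _ := by
      rw [Finset.sum_const, Finset.card_powersetCard, Finset.card_product, nsmul_eq_mul]

theorem sum_bad (n : ℕ) (hn : 0 < n) {p C : ℝ} (hp : p ∈ Set.Icc (0:ℝ) 1) (hpC : p ≤ C / n) (R : ℕ) :
    ∑ v, (diMeasure n p).real {A | ¬ good A R v} ≤
      ∑ k ∈ Finset.range (2 * R + 2), (k * ((k * k).choose k : ℕ) * C ^ k : ℝ) := by
  have := di_prob n hp
  have hn' : (0:ℝ) < n := by exact_mod_cast hn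
  have h1 : ∀ v : Fin n, (diMeasure n p).real {A | ¬ good A R v} ≤
      ∑ k ∈ Finset.range (2 * R + 2), ∑ S ∈ (Finset.univ : Finset (Fin n)).powersetCard k,
        if v ∈ S then (diMeasure n p).real {A | dense A S} else 0 := by
    intro v
    have hsub : {A | ¬ good A R v} ⊆ ⋃ k ∈ Finset.range (2 * R + 2),
        ⋃ S ∈ (Finset.univ : Finset (Fin n)).powersetCard k, {A | v ∈ S ∧ dense A S} := by
      intro A hA
      obtain ⟨S, q1, q2, q3⟩ := exists_dense A R v hA
      simp only [Set.mem_iUnion]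
      exact ⟨S.card, by simp; omega, S, by simp, q1, q3⟩
    refine (measureReal_mono hsub (measure_ne_top _ _)).trans ?_
    refine (measureReal_biUnion_finset_le _ _).trans (Finset.sum_le_sum (fun k _ => ?_))
    refine (measureReal_biUnion_finset_le _ _).trans (Finset.sum_le_sum (fun S _ => ?_))
    split_ifs with h <;> simp [h]
  refine (Finset.sum_le_sum (fun v _ => h1 v)).trans ?_
  rw [Finset.sum_comm]
  apply Finset.sum_le_sum
  intro k _
  rw [Finset.sum_comm]
  have h2 : ∀ S ∈ (Finset.univ : Finset (Fin n)).powersetCard k,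
      (∑ v, if v ∈ S then (diMeasure n p).real {A | dense A S} else 0) ≤
        k * (((k * k).choose k : ℕ) * (C / n) ^ k) := by
    intro S hS
    have hk := (Finset.mem_powersetCard.1 hS).2
    rw [Finset.sum_ite_mem, Finset.univ_inter, Finset.sum_const, nsmul_eq_mul, hk]
    have := di_dense n hp S
    rw [hk] at this
    have h3 : p ^ k ≤ (C / n) ^ k := pow_le_pow_left₀ hp.1 hpC k
    gcongr
    exact this.trans (by gcongr)
  refine (Finset.sum_le_sum h2).trans ?_
  rw [Finset.sum_const, Finset.card_powersetCard, nsmul_eq_mul, Finset.card_univ, Fintype.card_fin]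
  have hC0 : 0 ≤ C / n := hp.1.trans hpC
  have h4 : ((n.choose k : ℕ) : ℝ) ≤ (n:ℝ) ^ k := by exact_mod_cast Nat.choose_le_pow n k
  calc _ ≤ (n:ℝ)^k * (k * (((k * k).choose k : ℕ) * (C / n) ^ k)) := by gcongr
    _ = _ := by
      rw [div_pow]; field_simp

open Classical in
theorem markov (n : ℕ) (hn : 0 < n) {p C : ℝ} (hp : p ∈ Set.Icc (0:ℝ) 1) (hpC : p ≤ C / n) (R : ℕ)
    (δ : ℝ) (hδ : 0 < δ) :
    (diMeasure n p).real {A | δ * n ≤ ((Finset.univ.filter (fun v => ¬ good A R v)).card : ℝ)} ≤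
      (∑ k ∈ Finset.range (2 * R + 2), (k * ((k * k).choose k : ℕ) * C ^ k : ℝ)) / δ / n := by
  have := di_prob n hp
  have hn' : (0:ℝ) < n := by exact_mod_cast hn
  have hms : ∀ s : Set (Fin n → Fin n → Bool), MeasurableSet s := fun s => (Set.toFinite s).measurableSet
  have hIntg : ∀ f : (Fin n → Fin n → Bool) → ℝ, Integrable f (diMeasure n p) := fun f => Integrable.of_finite
  have h1 := mul_meas_ge_le_integral_of_nonneg (μ := diMeasure n p)
    (f := fun A => ((Finset.univ.filter (fun v => ¬ good A R v)).card : ℝ))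
    (Filter.Eventually.of_forall (fun A => by positivity)) (hIntg _) (δ * n)
  have h2 : ∫ A, ((Finset.univ.filter (fun v => ¬ good A R v)).card : ℝ) ∂(diMeasure n p) =
      ∑ v, (diMeasure n p).real {A | ¬ good A R v} := by
    have : ∀ A : Fin n → Fin n → Bool, ((Finset.univ.filter (fun v => ¬ good A R v)).card : ℝ) =
        ∑ v, Set.indicator {A | ¬ good A R v} (fun _ => (1:ℝ)) A := by
      intro A
      simp only [Set.indicator_apply, Set.mem_ofPred_eq]
      rw [Finset.sum_boole]
    simp only [this]
    rw [integral_finsetSum _ (fun _ _ => hIntg _)]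
    apply Finset.sum_congr rfl
    intro v _
    rw [integral_indicator (hms _)]
    simp
  rw [h2] at h1
  have h3 := h1.trans (sum_bad n hn hp hpC R)
  rw [div_div, le_div_iff₀ (by positivity)]
  linarith

theorem maj_of_not {A : Fin n → Fin n → Bool} {c : Fin n → Fin 3} {v : Fin n} 
    (h : ¬ MajorityAt A c v) : maj A v c (c v) := by
  unfold MajorityAt at h
  unfold maj cnt
  have e1 : ({w | DiAdj A v w} : Set (Fin n)) = (nbr A v : Finset (Fin n)) := by
    ext w; simp [nbr, DiAdj]
  have e2 : ({w | DiAdj A v w ∧ c w = c v} : Set (Fin n)) =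
      ((nbr A v).filter (fun w => c w = c v) : Finset (Fin n)) := by
    ext w; simp [nbr, DiAdj]
  rw [e1, e2, Set.ncard_coe_finset, Set.ncard_coe_finset] at h
  omega

end Maj

/-- Fix `C > 0` and let `pₙ ≤ C/n`. Then for every `ε > 0`, with high probability
`𝔻(n,pₙ)` has a 3-colouring in which all but at most `ε·n` vertices are
majority-coloured. -/
theorem whp_almost_majority_three_colouring (C : ℝ) (hC : 0 < C)
    (p : ℕ → ℝ) (hp : ∀ n, p n ∈ Set.Icc (0 : ℝ) 1) (hpC : ∀ n : ℕ, p n ≤ C / n)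
    (ε : ℝ) (hε : 0 < ε) :
    Tendsto (fun n => diMeasure n (p n)
        {A | ∃ c : Fin n → Fin 3,
          ((({v | ¬ MajorityAt A c v} : Set (Fin n)).ncard : ℝ)) ≤ ε * n})
      atTop (nhds 1) := by
  classical
  obtain ⟨t, ht⟩ := exists_pow_lt_of_lt_one (half_pos hε) (show (4/5:ℝ) < 1 by norm_num)
  set L : ℝ := ∑ k ∈ Finset.range (2 * (t+1) + 2), (k * ((k * k).choose k : ℕ) * C ^ k : ℝ) with hL
  have hlow : ∀ n : ℕ, 0 < n → 1 - L / (ε/2) / n ≤ (diMeasure n (p n)).real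
        {A | ∃ c : Fin n → Fin 3,
          ((({v | ¬ MajorityAt A c v} : Set (Fin n)).ncard : ℝ)) ≤ ε * n} := by
    intro n hn
    have := Maj.di_prob n (hp n)
    have h1 := Maj.markov n hn (hp n) (hpC n) (t+1) (ε/2) (half_pos hε)
    have hsub : {A : Fin n → Fin n → Bool | (ε/2) * n ≤
        ((Finset.univ.filter (fun v => ¬ Maj.good A (t+1) v)).card : ℝ)}ᶜ ⊆ {A | ∃ c : Fin n → Fin 3,
          ((({v | ¬ MajorityAt A c v} : Set (Fin n)).ncard : ℝ)) ≤ ε * n} := by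
      intro A hA
      have hA' : ((Finset.univ.filter (fun v => ¬ Maj.good A (t+1) v)).card : ℝ) < (ε/2) * n :=
        not_le.1 hA
      obtain ⟨c, hc⟩ := Maj.exists_col A t
      refine ⟨c, ?_⟩
      have h2 : (({v | ¬ MajorityAt A c v} : Set (Fin n)).ncard : ℝ) ≤
          ((Finset.univ.filter (fun v => Maj.maj A v c (c v))).card : ℝ) := by
        have h5 : ({v | ¬ MajorityAt A c v} : Set (Fin n)) ⊆
            (Finset.univ.filter (fun v => Maj.maj A v c (c v)) : Finset (Fin n)) := by
          intro v hv
          exact Finset.mem_coe.2 (Finset.mem_filter.2 ⟨Finset.mem_univ _, Maj.maj_of_not hv⟩)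
        have h6 := Set.ncard_le_ncard h5 (Set.toFinite _)
        rw [Set.ncard_coe_finset] at h6
        exact Nat.cast_le.2 h6
      have h3 : (n:ℝ) * (4/5)^t ≤ n * (ε/2) := by gcongr
      linarith
    have h4 := measureReal_mono (μ := diMeasure n (p n)) hsub (measure_ne_top _ _)
    rw [probReal_compl_eq_one_sub (Set.toFinite _).measurableSet] at h4
    linarith
  have hreal : Tendsto (fun n => (diMeasure n (p n)).real
        {A | ∃ c : Fin n → Fin 3,
          ((({v | ¬ MajorityAt A c v} : Set (Fin n)).ncard : ℝ)) ≤ ε * n}) atTop (nhds 1) := by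
    refine tendsto_of_tendsto_of_tendsto_of_le_of_le' (g := fun n : ℕ => 1 - L / (ε/2) / n)
      (h := fun _ => (1:ℝ)) ?_ tendsto_const_nhds ?_ ?_
    · have := (tendsto_const_div_atTop_nhds_zero_nat (L / (ε/2))).const_sub 1
      simpa using this
    · filter_upwards [eventually_gt_atTop 0] with n hn using hlow n hn
    · refine Eventually.of_forall (fun n => ?_)
      have := Maj.di_prob n (hp n)
      exact measureReal_le_one
  have := ENNReal.tendsto_ofReal hreal
  rw [ENNReal.ofReal_one] at this
  refine this.congr (fun n => ?_)
  have := Maj.di_prob n (hp n)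
  exact ofReal_measureReal (measure_ne_top _ _)
end
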